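/- arXiv:2202.04339 — 8 statements merged into one kernel-verified Lean document; each statement's English description precedes it below -/
import Mathlib

section
/- Let J ≥ 1, v₀,…,v_J ∈ ℝ, and let ε = (ε₁,…,ε_J) be a random vector on ℝ^J with density Σ_{k=1}^m ω_k φ(·; μ_k, σ_k), where m ≥ 1, ω_k > 0 with Σ_{k=1}^m ω_k = 1, μ_k ∈ ℝ^J and σ_k > 0; set ε₀ = 0. Define A_k = log Σ_{j=1}^J exp((v_j + μ_{jk})/σ_k) and a_k = v₀/σ_k + γ − A_k. Then Pr(v₀ + ε₀ ≥ v_j + ε_j for all j = 1,…,J) = Σ_{k=1}^m ω_k exp(−e^{−a_k}). -/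
open MeasureTheory Real

/-- The standardized univariate Gumbel density `φ(z) = exp(−z − γ − e^{−(z+γ)})`. -/
noncomputable def gumbelPdf (z : ℝ) : ℝ :=
  Real.exp (-z - Real.eulerMascheroniConstant - Real.exp (-(z + Real.eulerMascheroniConstant)))

/-- The multivariate Gumbel density `φ(z; μ, σ) = ∏_j (1/σ) φ((z_j − μ_j)/σ)`. -/
noncomputable def mGumbelPdf {J : ℕ} (μ : Fin J → ℝ) (σ : ℝ) (z : Fin J → ℝ) : ℝ :=
  ∏ j, (1 / σ) * gumbelPdf ((z j - μ j) / σ)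

/-- The distribution function of the Gumbel law with location `c` and scale `s`. -/
noncomputable def gumbelCdf (c s x : ℝ) : ℝ :=
  Real.exp (-Real.exp (-((x - c) / s + Real.eulerMascheroniConstant)))

lemma hasDerivAt_gumbelCdf (c s x : ℝ) :
    HasDerivAt (gumbelCdf c s) ((1 / s) * gumbelPdf ((x - c) / s)) x := by
  have h := ((((hasDerivAt_id x).sub_const c).div_const s).add_const
    Real.eulerMascheroniConstant).neg.exp.neg.exp
  refine h.congr_deriv ?_
  have hpdf : gumbelPdf ((x - c) / s) =
      Real.exp (-Real.exp (-((x - c) / s + Real.eulerMascheroniConstant))) *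
        Real.exp (-((x - c) / s + Real.eulerMascheroniConstant)) := by
    rw [gumbelPdf, ← Real.exp_add]
    ring_nf
  rw [hpdf]
  simp only [Pi.neg_apply, id]
  ring

lemma tendsto_gumbelCdf_atBot (c : ℝ) {s : ℝ} (hs : 0 < s) :
    Filter.Tendsto (gumbelCdf c s) Filter.atBot (nhds 0) := by
  refine Real.tendsto_exp_neg_atTop_nhds_zero.comp (Real.tendsto_exp_atTop.comp
    (Filter.tendsto_neg_atBot_atTop.comp ?_))
  exact Filter.tendsto_atBot_add_const_right _ _
    ((Filter.tendsto_atBot_add_const_right _ (-c) Filter.tendsto_id).atBot_div_const hs)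

lemma continuous_gumbelPdf : Continuous gumbelPdf := by
  unfold gumbelPdf
  fun_prop

lemma integrableOn_Iic_gumbelPdf (c : ℝ) {s : ℝ} (hs : 0 < s) (b : ℝ) :
    IntegrableOn (fun x => (1 / s) * gumbelPdf ((x - c) / s)) (Set.Iic b) := by
  have hcont : Continuous fun x => (1 / s) * gumbelPdf ((x - c) / s) :=
    continuous_const.mul (continuous_gumbelPdf.comp (by fun_prop))
  have hnonneg (x : ℝ) : 0 ≤ (1 / s) * gumbelPdf ((x - c) / s) := by
    unfold gumbelPdf
    positivity
  refine integrableOn_Iic_of_intervalIntegral_norm_bounded (gumbelCdf c s b) b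
    (fun _ => hcont.integrableOn_Ioc) Filter.tendsto_id (Filter.Eventually.of_forall fun y => ?_)
  simp_rw [Real.norm_of_nonneg (hnonneg _)]
  rw [intervalIntegral.integral_eq_sub_of_hasDerivAt (fun x _ => hasDerivAt_gumbelCdf c s x)
    (hcont.intervalIntegrable _ _)]
  exact sub_le_self _ (Real.exp_pos _).le

lemma integral_Iic_gumbelPdf (c : ℝ) {s : ℝ} (hs : 0 < s) (b : ℝ) :
    ∫ x in Set.Iic b, (1 / s) * gumbelPdf ((x - c) / s) = gumbelCdf c s b := by
  rw [integral_Iic_of_hasDerivAt_of_tendsto' (fun x _ => hasDerivAt_gumbelCdf c s x)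
    (integrableOn_Iic_gumbelPdf c hs b) (tendsto_gumbelCdf_atBot c hs), sub_zero]

lemma volume_restrict_pi_Iic {J : ℕ} (b : Fin J → ℝ) :
    (volume : Measure (Fin J → ℝ)).restrict (Set.univ.pi fun j => Set.Iic (b j)) =
      Measure.pi fun j => (volume : Measure ℝ).restrict (Set.Iic (b j)) := by
  rw [volume_pi, Measure.restrict_pi_pi]

lemma integrableOn_pi_Iic_mGumbelPdf {J : ℕ} (c : Fin J → ℝ) {s : ℝ} (hs : 0 < s)
    (b : Fin J → ℝ) :
    IntegrableOn (mGumbelPdf c s) (Set.univ.pi fun j => Set.Iic (b j)) := by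
  rw [IntegrableOn, volume_restrict_pi_Iic]
  exact Integrable.fintype_prod fun j => integrableOn_Iic_gumbelPdf (c j) hs (b j)

lemma integral_pi_Iic_mGumbelPdf {J : ℕ} (c : Fin J → ℝ) {s : ℝ} (hs : 0 < s)
    (b : Fin J → ℝ) :
    ∫ z in Set.univ.pi fun j => Set.Iic (b j), mGumbelPdf c s z =
      ∏ j, gumbelCdf (c j) s (b j) := by
  rw [volume_restrict_pi_Iic]
  unfold mGumbelPdf
  rw [integral_fintype_prod_eq_prod (fun j x => (1 / s) * gumbelPdf ((x - c j) / s))]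
  exact Finset.prod_congr rfl fun j _ => integral_Iic_gumbelPdf (c j) hs (b j)

/-- The product of Gumbel distribution functions at `w - u j` in log-sum-exp form. -/
lemma prod_gumbelCdf_sub {J : ℕ} (hJ : 1 ≤ J) (c u : Fin J → ℝ) (s w : ℝ) :
    ∏ j, gumbelCdf (c j) s (w - u j) =
      Real.exp (-Real.exp (-(w / s + Real.eulerMascheroniConstant -
        Real.log (∑ j, Real.exp ((u j + c j) / s))))) := by
  have : Nonempty (Fin J) := ⟨⟨0, hJ⟩⟩
  have hpos : 0 < ∑ j, Real.exp ((u j + c j) / s) :=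
    Finset.sum_pos (fun _ _ => Real.exp_pos _) Finset.univ_nonempty
  simp only [gumbelCdf]
  rw [← Real.exp_sum, Finset.sum_neg_distrib, neg_sub, sub_eq_add_neg, Real.exp_add,
    Real.exp_log hpos, Finset.sum_mul]
  simp only [← Real.exp_add]
  congr! 4
  ring

/-- CCP of the base alternative `d = 0` under a finite location-scale mixture of Gumbels. -/
theorem ccp_zero_of_gumbel_mixture
    (J m : ℕ) (hJ : 1 ≤ J) (hm : 1 ≤ m)
    (v : Fin (J + 1) → ℝ)
    (ω : Fin m → ℝ) (μ : Fin m → Fin J → ℝ) (σ : Fin m → ℝ)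
    (hω : ∀ k, 0 < ω k) (hωsum : ∑ k, ω k = 1) (hσ : ∀ k, 0 < σ k)
    (A a : Fin m → ℝ)
    (hA : ∀ k, A k = Real.log (∑ j : Fin J, Real.exp ((v j.succ + μ k j) / σ k)))
    (ha : ∀ k, a k = v 0 / σ k + Real.eulerMascheroniConstant - A k) :
    ∫ z in {z : Fin J → ℝ | ∀ j : Fin J, v j.succ + z j ≤ v 0 + 0},
        (∑ k, ω k * mGumbelPdf (μ k) (σ k) z) =
      ∑ k, ω k * Real.exp (-Real.exp (-a k)) := by
  have hset : {z : Fin J → ℝ | ∀ j : Fin J, v j.succ + z j ≤ v 0 + 0} =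
      Set.univ.pi fun j => Set.Iic (v 0 - v j.succ) := by
    ext z
    simp [Pi.le_def, le_sub_iff_add_le']
  rw [hset, integral_finsetSum _ fun k _ =>
    (integrableOn_pi_Iic_mGumbelPdf (μ k) (hσ k) _).const_mul (ω k)]
  refine Finset.sum_congr rfl fun k _ => ?_
  rw [integral_const_mul, integral_pi_Iic_mGumbelPdf (μ k) (hσ k),
    prod_gumbelCdf_sub hJ (μ k) (fun j => v j.succ), ha, hA]
end

section
/- Let J ≥ 1, v₀,…,v_J ∈ ℝ, and let ε = (ε₁,…,ε_J) be a random vector on ℝ^J with density Σ_{k=1}^m ω_k φ(·; μ_k, σ_k), where m ≥ 1, ω_k > 0 with Σ_{k=1}^m ω_k = 1, μ_k ∈ ℝ^J and σ_k > 0; set ε₀ = 0. Define A_k = log Σ_{j=1}^J exp((v_j + μ_{jk})/σ_k) and a_k = v₀/σ_k + γ − A_k. Then for every d ∈ {1,…,J}, Pr(v_d + ε_d ≥ v_j + ε_j for all j = 0,1,…,J) = Σ_{k=1}^m ω_k exp((v_d + μ_{dk})/σ_k − A_k) · (1 − exp(−e^{−a_k})). -/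
open MeasureTheory Real

section

open Filter Topology Set

/-- The derivative of the Gumbel distribution function
`x ↦ exp (-C * exp (-x / s))`. -/
noncomputable def gumbelKernel (C s x : ℝ) : ℝ :=
  C / s * exp (-x / s) * exp (-C * exp (-x / s))

lemma hasDerivAt_exp_neg_mul_exp (C s x : ℝ) :
    HasDerivAt (fun x ↦ exp (-C * exp (-x / s))) (gumbelKernel C s x) x := by
  convert! ((((hasDerivAt_id x).neg.div_const s).exp).const_mul (-C)).exp using 1
  simp only [gumbelKernel, id, Pi.neg_apply]
  ring

lemma continuous_gumbelKernel (C s : ℝ) : Continuous (gumbelKernel C s) := by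
  unfold gumbelKernel
  fun_prop

lemma gumbelKernel_nonneg {C s : ℝ} (hC : 0 < C) (hs : 0 < s) (x : ℝ) :
    0 ≤ gumbelKernel C s x := by
  unfold gumbelKernel
  positivity

lemma tendsto_exp_neg_mul_exp_atTop {s : ℝ} (C : ℝ) (hs : 0 < s) :
    Tendsto (fun x ↦ exp (-C * exp (-x / s))) atTop (𝓝 1) := by
  have h : Tendsto (fun x : ℝ ↦ exp (-x / s)) atTop (𝓝 0) :=
    tendsto_exp_atBot.comp (tendsto_neg_atTop_atBot.atBot_div_const hs)
  simpa [Function.comp_def] using (continuous_exp.tendsto _).comp (h.const_mul (-C))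

lemma tendsto_exp_neg_mul_exp_atBot {C s : ℝ} (hC : 0 < C) (hs : 0 < s) :
    Tendsto (fun x ↦ exp (-C * exp (-x / s))) atBot (𝓝 0) := by
  have h : Tendsto (fun x : ℝ ↦ exp (-x / s)) atBot atTop :=
    tendsto_exp_atTop.comp (tendsto_neg_atBot_atTop.atTop_div_const hs)
  exact tendsto_exp_atBot.comp (h.const_mul_atTop_of_neg (neg_lt_zero.mpr hC))

lemma integrable_gumbelKernel {C s : ℝ} (hC : 0 < C) (hs : 0 < s) :
    Integrable (gumbelKernel C s) := by
  refine integrable_of_intervalIntegral_norm_bounded 1 (a := fun x : ℝ ↦ -x) (b := id)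
    (l := atTop) (fun _ ↦ (continuous_gumbelKernel C s).integrableOn_Ioc)
    tendsto_neg_atTop_atBot tendsto_id (Eventually.of_forall fun x ↦ ?_)
  simp only [norm_of_nonneg (gumbelKernel_nonneg hC hs _)]
  rw [intervalIntegral.integral_eq_sub_of_hasDerivAt
    (fun y _ ↦ hasDerivAt_exp_neg_mul_exp C s y)
    ((continuous_gumbelKernel C s).intervalIntegrable _ _)]
  have h₁ : exp (-C * exp (-id x / s)) ≤ 1 := by
    rw [exp_le_one_iff, neg_mul, neg_nonpos]
    positivity
  linarith [exp_pos (-C * exp (- -x / s))]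

lemma integral_Iic_gumbelKernel {C s : ℝ} (hC : 0 < C) (hs : 0 < s) (t : ℝ) :
    ∫ x in Iic t, gumbelKernel C s x = exp (-C * exp (-t / s)) := by
  rw [integral_Iic_of_hasDerivAt_of_tendsto' (fun x _ ↦ hasDerivAt_exp_neg_mul_exp C s x)
    (integrable_gumbelKernel hC hs).integrableOn (tendsto_exp_neg_mul_exp_atBot hC hs), sub_zero]

lemma integral_Ici_gumbelKernel {C s : ℝ} (hC : 0 < C) (hs : 0 < s) (t : ℝ) :
    ∫ x in Ici t, gumbelKernel C s x = 1 - exp (-C * exp (-t / s)) := by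
  rw [integral_Ici_eq_integral_Ioi]
  exact integral_Ioi_of_hasDerivAt_of_tendsto' (fun x _ ↦ hasDerivAt_exp_neg_mul_exp C s x)
    (integrable_gumbelKernel hC hs).integrableOn (tendsto_exp_neg_mul_exp_atTop C hs)

lemma one_div_mul_gumbelPdf (m s x : ℝ) :
    (1 / s) * gumbelPdf ((x - m) / s) =
      gumbelKernel (exp (m / s - eulerMascheroniConstant)) s x := by
  have h : exp (-((x - m) / s + eulerMascheroniConstant)) =
      exp (m / s - eulerMascheroniConstant) * exp (-x / s) := by
    rw [← exp_add]; congr 1; ring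
  have h' : -((x - m) / s) - eulerMascheroniConstant =
      -((x - m) / s + eulerMascheroniConstant) := by ring
  rw [gumbelPdf, gumbelKernel, sub_eq_add_neg (_ - _), exp_add, h', h]
  ring_nf

lemma mGumbelPdf_eq_prod_gumbelKernel {J : ℕ} (μ : Fin J → ℝ) (s : ℝ) (z : Fin J → ℝ) :
    mGumbelPdf μ s z =
      ∏ j, gumbelKernel (exp (μ j / s - eulerMascheroniConstant)) s (z j) := by
  simp only [mGumbelPdf, one_div_mul_gumbelPdf]

lemma integrable_mGumbelPdf {J : ℕ} (μ : Fin J → ℝ) {s : ℝ} (hs : 0 < s) :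
    Integrable (mGumbelPdf μ s) := by
  simp only [funext (mGumbelPdf_eq_prod_gumbelKernel μ s)]
  exact Integrable.fintype_prod fun j ↦ integrable_gumbelKernel (exp_pos _) hs

lemma measurableSet_choice {J : ℕ} (c : ℝ) (u : Fin J → ℝ) (d : Fin J) :
    MeasurableSet {z : Fin J → ℝ | c ≤ u d + z d ∧ ∀ j, u j + z j ≤ u d + z d} := by
  simp only [ofPred_and, ofPred_forall]
  exact (measurableSet_le (by fun_prop) (by fun_prop)).inter
    (MeasurableSet.iInter fun j ↦ measurableSet_le (by fun_prop) (by fun_prop))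

/-- The integral of a product density over the region where coordinate `d` is the best
alternative, as a one-dimensional integral. -/
lemma setIntegral_choice_prod {n : ℕ} (f : Fin (n + 1) → ℝ → ℝ) (hf : ∀ j, Integrable (f j))
    (c : ℝ) (u : Fin (n + 1) → ℝ) (d : Fin (n + 1)) :
    ∫ z in {z : Fin (n + 1) → ℝ | c ≤ u d + z d ∧ ∀ j, u j + z j ≤ u d + z d}, ∏ j, f j (z j) =
      ∫ x in Ici (c - u d), f d x *
        ∏ i, ∫ y in Iic (u d + x - u (d.succAbove i)), f (d.succAbove i) y := by
  have hS := measurableSet_choice c u d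
  set S := {z : Fin (n + 1) → ℝ | c ≤ u d + z d ∧ ∀ j, u j + z j ≤ u d + z d}
  have he := (volume_preserving_piFinSuccAbove (fun _ : Fin (n + 1) ↦ ℝ) d).symm
  have hint : Integrable (S.indicator fun z ↦ ∏ j, f j (z j)) :=
    (Integrable.fintype_prod hf).indicator hS
  rw [← integral_indicator hS, ← he.integral_comp', Measure.volume_eq_prod, integral_prod]
  · rw [← integral_indicator measurableSet_Ici]
    congr 1 with x
    have key : ∀ w : Fin n → ℝ, S.indicator (fun z ↦ ∏ j, f j (z j))
        ((MeasurableEquiv.piFinSuccAbove (fun _ : Fin (n + 1) ↦ ℝ) d).symm (x, w)) =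
        (Ici (c - u d)).indicator (f d) x *
          ∏ i, (Iic (u d + x - u (d.succAbove i))).indicator (f (d.succAbove i)) (w i) := by
      intro w
      change S.indicator (fun z ↦ ∏ j, f j (z j)) (d.insertNth x w) = _
      have hmem : d.insertNth (α := fun _ ↦ ℝ) x w ∈ S ↔
          x ∈ Ici (c - u d) ∧ ∀ i, w i ∈ Iic (u d + x - u (d.succAbove i)) := by
        simp only [S, mem_ofPred_eq, d.forall_iff_succAbove, Fin.insertNth_apply_same,
          Fin.insertNth_apply_succAbove, mem_Ici, mem_Iic, le_refl, true_and,
          sub_le_iff_le_add', le_sub_iff_add_le']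
      by_cases h : d.insertNth (α := fun _ ↦ ℝ) x w ∈ S
      · rw [indicator_of_mem h, indicator_of_mem (hmem.1 h).1, Fin.prod_univ_succAbove _ d]
        simp only [Fin.insertNth_apply_same, Fin.insertNth_apply_succAbove]
        congr 1
        exact Finset.prod_congr rfl fun i _ ↦ (indicator_of_mem ((hmem.1 h).2 i) _).symm
      · rw [indicator_of_notMem h]
        by_cases hx : x ∈ Ici (c - u d)
        · obtain ⟨i, hi⟩ : ∃ i, w i ∉ Iic (u d + x - u (d.succAbove i)) := by
            by_contra! hall
            exact h (hmem.2 ⟨hx, hall⟩)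
          rw [Finset.prod_eq_zero (Finset.mem_univ i) (indicator_of_notMem hi _), mul_zero]
        · rw [indicator_of_notMem hx, zero_mul]
    simp only [key]
    rw [integral_const_mul, integral_fintype_prod_volume_eq_prod, indicator_mul_left]
    simp only [integral_indicator measurableSet_Iic]
  · rw [← Measure.volume_eq_prod]
    exact he.integrable_comp_of_integrable hint

/-- The probability of choosing `d` under a single Gumbel component. -/
lemma setIntegral_choice_mGumbelPdf {J : ℕ} (μ : Fin J → ℝ) {s : ℝ} (hs : 0 < s) (c : ℝ)
    (u : Fin J → ℝ) (d : Fin J) {A : ℝ} (hA : A = log (∑ j, exp ((u j + μ j) / s))) :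
    ∫ z in {z : Fin J → ℝ | c ≤ u d + z d ∧ ∀ j, u j + z j ≤ u d + z d}, mGumbelPdf μ s z =
      exp ((u d + μ d) / s - A) *
        (1 - exp (-exp (-(c / s + eulerMascheroniConstant - A)))) := by
  obtain ⟨n, rfl⟩ : ∃ n, J = n + 1 := ⟨J - 1, by have := d.pos; omega⟩
  have hexpA : exp A = ∑ j, exp ((u j + μ j) / s) := by
    rw [hA, exp_log]
    exact Finset.sum_pos (fun _ _ ↦ exp_pos _) Finset.univ_nonempty
  simp only [mGumbelPdf_eq_prod_gumbelKernel]
  rw [setIntegral_choice_prod _ fun j ↦ integrable_gumbelKernel (exp_pos _) hs]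
  simp only [integral_Iic_gumbelKernel (exp_pos _) hs]
  set D := exp (A - eulerMascheroniConstant - u d / s) with hD
  have hDsum : D = ∑ j, exp (μ j / s - eulerMascheroniConstant) * exp ((u j - u d) / s) := by
    rw [hD, show A - eulerMascheroniConstant - u d / s =
      A + (-eulerMascheroniConstant - u d / s) by ring, exp_add, hexpA, Finset.sum_mul]
    refine Finset.sum_congr rfl fun j _ ↦ ?_
    rw [← exp_add, ← exp_add]
    congr 1
    ring
  have hker : ∀ x, gumbelKernel (exp (μ d / s - eulerMascheroniConstant)) s x *
      ∏ i, exp (-exp (μ (d.succAbove i) / s - eulerMascheroniConstant) *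
        exp (-(u d + x - u (d.succAbove i)) / s)) =
      exp ((u d + μ d) / s - A) * gumbelKernel D s x := by
    intro x
    have hcoef : exp ((u d + μ d) / s - A) * D = exp (μ d / s - eulerMascheroniConstant) := by
      rw [hD, ← exp_add]
      congr 1
      ring
    have hexponent : -D * exp (-x / s) =
        -exp (μ d / s - eulerMascheroniConstant) * exp (-x / s) +
          ∑ i, -exp (μ (d.succAbove i) / s - eulerMascheroniConstant) *
            exp (-(u d + x - u (d.succAbove i)) / s) := by
      rw [hDsum, Fin.sum_univ_succAbove _ d, sub_self, zero_div, exp_zero, mul_one, neg_add,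
        add_mul, ← Finset.sum_neg_distrib, Finset.sum_mul]
      congr 1
      refine Finset.sum_congr rfl fun i _ ↦ ?_
      rw [← neg_mul, mul_assoc, ← exp_add]
      congr 2
      ring
    rw [← exp_sum, gumbelKernel, gumbelKernel, hexponent, exp_add, ← hcoef]
    ring
  simp only [hker]
  rw [integral_const_mul, integral_Ici_gumbelKernel (exp_pos _) hs, neg_mul, ← exp_add]
  congr 5
  ring

end

/-- CCP of alternative `d ∈ {1,…,J}` under a finite location-scale mixture of Gumbels. -/
theorem ccp_pos_of_gumbel_mixture
    (J m : ℕ) (hJ : 1 ≤ J) (hm : 1 ≤ m)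
    (v : Fin (J + 1) → ℝ)
    (ω : Fin m → ℝ) (μ : Fin m → Fin J → ℝ) (σ : Fin m → ℝ)
    (hω : ∀ k, 0 < ω k) (hωsum : ∑ k, ω k = 1) (hσ : ∀ k, 0 < σ k)
    (A a : Fin m → ℝ)
    (hA : ∀ k, A k = Real.log (∑ j : Fin J, Real.exp ((v j.succ + μ k j) / σ k)))
    (ha : ∀ k, a k = v 0 / σ k + Real.eulerMascheroniConstant - A k)
    (d : Fin J) :
    ∫ z in {z : Fin J → ℝ |
        (v 0 + 0 ≤ v d.succ + z d) ∧ ∀ j : Fin J, v j.succ + z j ≤ v d.succ + z d},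
        (∑ k, ω k * mGumbelPdf (μ k) (σ k) z) =
      ∑ k, ω k * Real.exp ((v d.succ + μ k d) / σ k - A k) *
        (1 - Real.exp (-Real.exp (-a k))) := by
  rw [integral_finsetSum _ fun k _ ↦
    ((integrable_mGumbelPdf (μ k) (hσ k)).const_mul (ω k)).integrableOn]
  refine Finset.sum_congr rfl fun k _ ↦ ?_
  rw [integral_const_mul, mul_assoc, add_zero, ha k,
    setIntegral_choice_mGumbelPdf (μ k) (hσ k) (v 0) (fun j ↦ v j.succ) d (hA k)]
end

section
/- Consider the dynamic discrete choice model with finite state space, and suppose |u(x,j)| ≤ ū < ∞ for all x ∈ X and j = 0,1,…,J. Let F be a probability distribution on ℝ^{J+1} with a density and with E_F|ε_j| < ∞ for all j, and let F̃ be any probability distribution on ℝ^{J+1} with a density and finite first moments. Then, with C = max{1, ū + β(ū + Σ_{j=0}^J E_F|ε_j|)/(1−β)} / (1−β), the Emax functions satisfy sup_{x∈X} |Q(x;F) − Q(x;F̃)| ≤ C · ρ(F,F̃). -/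
open MeasureTheory Real

section ShockedMax

variable {J : ℕ}

theorem abs_sup'_add_le {a z : Fin (J + 1) → ℝ} {A : ℝ} (ha : ∀ j, |a j| ≤ A) :
    |Finset.univ.sup' Finset.univ_nonempty (fun j => a j + z j)| ≤ A + ∑ j, |z j| := by
  have hz : ∀ j, |z j| ≤ ∑ i, |z i| := fun j =>
    Finset.single_le_sum (f := fun i => |z i|) (fun i _ => abs_nonneg _) (Finset.mem_univ j)
  obtain ⟨j, -, hj⟩ := Finset.exists_mem_eq_sup' Finset.univ_nonempty (fun j => a j + z j)
  rw [hj]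
  exact (abs_add_le _ _).trans (add_le_add (ha j) (hz j))

theorem sup'_add_le_sup'_add {a b z : Fin (J + 1) → ℝ} {δ : ℝ} (h : ∀ j, |a j - b j| ≤ δ) :
    Finset.univ.sup' Finset.univ_nonempty (fun j => a j + z j) ≤
      Finset.univ.sup' Finset.univ_nonempty (fun j => b j + z j) + δ := by
  refine Finset.sup'_le _ _ fun j _ => ?_
  have hb := Finset.le_sup' (fun j => b j + z j) (Finset.mem_univ j)
  have hj := (abs_le.1 (h j)).2
  linarith

theorem abs_sup'_add_sub_sup'_add_le {a b z : Fin (J + 1) → ℝ} {δ : ℝ}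
    (h : ∀ j, |a j - b j| ≤ δ) :
    |Finset.univ.sup' Finset.univ_nonempty (fun j => a j + z j) -
      Finset.univ.sup' Finset.univ_nonempty (fun j => b j + z j)| ≤ δ := by
  have hab := sup'_add_le_sup'_add (z := z) h
  have hba := sup'_add_le_sup'_add (a := b) (b := a) (z := z) (δ := δ)
    fun j => by rw [abs_sub_comm]; exact h j
  exact abs_le.2 ⟨by linarith, by linarith⟩

theorem continuous_sup'_add (a : Fin (J + 1) → ℝ) :
    Continuous fun z : Fin (J + 1) → ℝ =>
      Finset.univ.sup' Finset.univ_nonempty (fun j => a j + z j) :=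
  Continuous.finset_sup'_apply _ fun j _ => by fun_prop

theorem integrable_const_add_sum_abs_mul {g : (Fin (J + 1) → ℝ) → ℝ} (hg : Integrable g)
    (hmom : ∀ j, Integrable fun z : Fin (J + 1) → ℝ => |z j| * g z) (A : ℝ) :
    Integrable fun z : Fin (J + 1) → ℝ => (A + ∑ j, |z j|) * g z := by
  simp only [add_mul, Finset.sum_mul]
  exact (hg.const_mul A).add (integrable_finsetSum _ fun j _ => hmom j)

theorem integral_const_add_sum_abs_mul {g : (Fin (J + 1) → ℝ) → ℝ} (hg : Integrable g)
    (hmom : ∀ j, Integrable fun z : Fin (J + 1) → ℝ => |z j| * g z) (A : ℝ) :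
    ∫ z : Fin (J + 1) → ℝ, (A + ∑ j, |z j|) * g z =
      A * (∫ z, g z) + ∑ j, ∫ z : Fin (J + 1) → ℝ, |z j| * g z := by
  simp only [add_mul, Finset.sum_mul]
  rw [integral_add (hg.const_mul A) (integrable_finsetSum _ fun j _ => hmom j),
    integral_const_mul, integral_finsetSum _ fun j _ => hmom j]

theorem integrable_sup'_add_mul {g : (Fin (J + 1) → ℝ) → ℝ} (hg : Integrable g)
    (hnonneg : ∀ z, 0 ≤ g z)
    (hmom : ∀ j, Integrable fun z : Fin (J + 1) → ℝ => |z j| * g z)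
    {a : Fin (J + 1) → ℝ} {A : ℝ} (ha : ∀ j, |a j| ≤ A) :
    Integrable fun z : Fin (J + 1) → ℝ =>
      Finset.univ.sup' Finset.univ_nonempty (fun j => a j + z j) * g z := by
  refine (integrable_const_add_sum_abs_mul hg hmom A).mono'
    ((continuous_sup'_add a).aestronglyMeasurable.mul hg.aestronglyMeasurable)
    (ae_of_all _ fun z => ?_)
  rw [norm_mul, Real.norm_eq_abs, Real.norm_eq_abs, abs_of_nonneg (hnonneg z)]
  exact mul_le_mul_of_nonneg_right (abs_sup'_add_le ha) (hnonneg z)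

theorem abs_integral_sup'_add_mul_le {g : (Fin (J + 1) → ℝ) → ℝ} (hg : Integrable g)
    (hnonneg : ∀ z, 0 ≤ g z) (hprob : ∫ z, g z = 1)
    (hmom : ∀ j, Integrable fun z : Fin (J + 1) → ℝ => |z j| * g z)
    {a : Fin (J + 1) → ℝ} {A : ℝ} (ha : ∀ j, |a j| ≤ A) :
    |∫ z : Fin (J + 1) → ℝ,
        Finset.univ.sup' Finset.univ_nonempty (fun j => a j + z j) * g z| ≤
      A + ∑ j, ∫ z : Fin (J + 1) → ℝ, |z j| * g z := by
  have h := norm_integral_le_of_norm_le (integrable_const_add_sum_abs_mul hg hmom A)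
    (f := fun z => Finset.univ.sup' Finset.univ_nonempty (fun j => a j + z j) * g z)
    (ae_of_all _ fun z => by
      rw [norm_mul, Real.norm_eq_abs, Real.norm_eq_abs, abs_of_nonneg (hnonneg z)]
      exact mul_le_mul_of_nonneg_right (abs_sup'_add_le ha) (hnonneg z))
  rwa [integral_const_add_sum_abs_mul hg hmom, hprob, mul_one, Real.norm_eq_abs] at h

/-- Splitting the change of the expected maximum into a change of density and a change of the
deterministic parts. -/
theorem abs_integral_sup'_add_mul_sub_le {f g : (Fin (J + 1) → ℝ) → ℝ}
    (hf : Integrable f) (hf0 : ∀ z, 0 ≤ f z)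
    (hfmom : ∀ j, Integrable fun z : Fin (J + 1) → ℝ => |z j| * f z)
    (hg : Integrable g) (hg0 : ∀ z, 0 ≤ g z) (hgprob : ∫ z, g z = 1)
    (hgmom : ∀ j, Integrable fun z : Fin (J + 1) → ℝ => |z j| * g z)
    {a b : Fin (J + 1) → ℝ} {A B δ M : ℝ} (ha : ∀ j, |a j| ≤ A) (hb : ∀ j, |b j| ≤ B)
    (hab : ∀ j, |a j - b j| ≤ δ) (hM1 : 1 ≤ M) (hAM : A ≤ M) :
    |(∫ z : Fin (J + 1) → ℝ,
        Finset.univ.sup' Finset.univ_nonempty (fun j => a j + z j) * f z) -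
      ∫ z : Fin (J + 1) → ℝ,
        Finset.univ.sup' Finset.univ_nonempty (fun j => b j + z j) * g z| ≤
      M * (∫ z : Fin (J + 1) → ℝ, (1 + ∑ j, |z j|) * |f z - g z|) + δ := by
  have hmom : ∀ j, Integrable fun z : Fin (J + 1) → ℝ => |z j| * |f z - g z| := fun j => by
    have h := ((hfmom j).sub (hgmom j)).abs
    refine h.congr (ae_of_all _ fun z => ?_)
    simp only [Pi.sub_apply]
    rw [← mul_sub, abs_mul, abs_abs]
  have hρ := integrable_const_add_sum_abs_mul (hf.sub hg).abs hmom 1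
  simp only [Pi.sub_apply] at hρ
  rw [← integral_sub (integrable_sup'_add_mul hf hf0 hfmom ha)
    (integrable_sup'_add_mul hg hg0 hgmom hb)]
  have h := norm_integral_le_of_norm_le ((hρ.const_mul M).add (hg.const_mul δ))
    (f := fun z => Finset.univ.sup' Finset.univ_nonempty (fun j => a j + z j) * f z -
      Finset.univ.sup' Finset.univ_nonempty (fun j => b j + z j) * g z)
    (ae_of_all _ fun z => by
      have hV := abs_sup'_add_le (z := z) ha
      have hW := abs_sup'_add_sub_sup'_add_le (z := z) hab
      have hz : 0 ≤ ∑ j, |z j| := Finset.sum_nonneg fun j _ => abs_nonneg _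
      have hVM : A + ∑ j, |z j| ≤ M * (1 + ∑ j, |z j|) := by nlinarith
      set V := Finset.univ.sup' Finset.univ_nonempty (fun j => a j + z j)
      set W := Finset.univ.sup' Finset.univ_nonempty (fun j => b j + z j)
      calc ‖V * f z - W * g z‖ = |V * (f z - g z) + (V - W) * g z| := by
            rw [Real.norm_eq_abs]; ring_nf
        _ ≤ |V| * |f z - g z| + |V - W| * g z := by
            refine (abs_add_le _ _).trans_eq ?_
            rw [abs_mul, abs_mul, abs_of_nonneg (hg0 z)]
        _ ≤ M * (1 + ∑ j, |z j|) * |f z - g z| + δ * g z :=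
            add_le_add (mul_le_mul_of_nonneg_right (hV.trans hVM) (abs_nonneg _))
              (mul_le_mul_of_nonneg_right hW (hg0 z))
        _ = _ := by simp only [Pi.add_apply]; ring)
  simp only [Pi.add_apply] at h
  rwa [integral_add (hρ.const_mul M) (hg.const_mul δ), integral_const_mul, integral_const_mul,
    hgprob, mul_one, Real.norm_eq_abs] at h

end ShockedMax

theorem abs_sum_mul_le_norm {ι : Type*} [Fintype ι] {p : ι → ℝ} (hp : ∀ y, 0 ≤ p y)
    (hsum : ∑ y, p y = 1) (q : ι → ℝ) : |∑ y, p y * q y| ≤ ‖q‖ := by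
  calc |∑ y, p y * q y| ≤ ∑ y, |p y * q y| := Finset.abs_sum_le_sum_abs _ _
    _ ≤ ∑ y, p y * ‖q‖ := Finset.sum_le_sum fun y _ => by
        rw [abs_mul, abs_of_nonneg (hp y)]
        exact mul_le_mul_of_nonneg_left (norm_le_pi_norm q y) (hp y)
    _ = ‖q‖ := by rw [← Finset.sum_mul, hsum, one_mul]

/-- Lipschitz continuity of the Emax function in the distribution of shocks,
in the distance `ρ(F,F̃) = ∫ (1 + Σ_j |ε_j|)|f(ε) − f̃(ε)| dε`. -/
theorem emax_lipschitz_in_shock_distribution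
    (K J : ℕ) (hK : 1 ≤ K)
    (u : Fin K → Fin (J + 1) → ℝ) (β : ℝ) (hβ0 : 0 ≤ β) (hβ1 : β < 1)
    (G : Fin (J + 1) → Fin K → Fin K → ℝ)
    (hGpos : ∀ d x y, 0 ≤ G d x y) (hGsum : ∀ d x, ∑ y, G d x y = 1)
    (ubar : ℝ) (hu : ∀ x j, |u x j| ≤ ubar)
    -- the density `f` of `F` and the density `ftil` of `F̃`
    (f ftil : (Fin (J + 1) → ℝ) → ℝ)
    (hfmeas : Measurable f) (hfnonneg : ∀ z, 0 ≤ f z)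
    (hfint : Integrable f) (hfprob : ∫ z, f z = 1)
    (hfmom : ∀ j, Integrable fun z : Fin (J + 1) → ℝ => |z j| * f z)
    (hgmeas : Measurable ftil) (hgnonneg : ∀ z, 0 ≤ ftil z)
    (hgint : Integrable ftil) (hgprob : ∫ z, ftil z = 1)
    (hgmom : ∀ j, Integrable fun z : Fin (J + 1) → ℝ => |z j| * ftil z)
    -- `Q` and `Qt` solve the Bellman equations under `F` and `F̃`, respectively
    (Q Qt : Fin K → ℝ)
    (hQ : ∀ x, Q x = ∫ z : Fin (J + 1) → ℝ,
      (Finset.univ.sup' Finset.univ_nonempty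
        (fun j : Fin (J + 1) => u x j + β * ∑ y, G j x y * Q y + z j)) * f z)
    (hQt : ∀ x, Qt x = ∫ z : Fin (J + 1) → ℝ,
      (Finset.univ.sup' Finset.univ_nonempty
        (fun j : Fin (J + 1) => u x j + β * ∑ y, G j x y * Qt y + z j)) * ftil z)
    (C : ℝ)
    (hC : C = max 1 (ubar + β * (ubar + ∑ j, ∫ z : Fin (J + 1) → ℝ, |z j| * f z) / (1 - β))
      / (1 - β)) :
    ∀ x, |Q x - Qt x| ≤
      C * ∫ z : Fin (J + 1) → ℝ, (1 + ∑ j, |z j|) * |f z - ftil z| := by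
  have hβ : 0 < 1 - β := sub_pos.2 hβ1
  have : Nonempty (Fin K) := ⟨⟨0, hK⟩⟩
  have hv : ∀ (q : Fin K → ℝ) x j, |u x j + β * ∑ y, G j x y * q y| ≤ ubar + β * ‖q‖ := by
    intro q x j
    refine (abs_add_le _ _).trans (add_le_add (hu x j) ?_)
    rw [abs_mul, abs_of_nonneg hβ0]
    exact mul_le_mul_of_nonneg_left (abs_sum_mul_le_norm (hGpos j x) (hGsum j x) q) hβ0
  have hdiff : ∀ x j, |(u x j + β * ∑ y, G j x y * Q y) -
      (u x j + β * ∑ y, G j x y * Qt y)| ≤ β * ‖Q - Qt‖ := by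
    intro x j
    rw [add_sub_add_left_eq_sub, ← mul_sub, ← Finset.sum_sub_distrib, abs_mul,
      abs_of_nonneg hβ0]
    simp only [← mul_sub]
    exact mul_le_mul_of_nonneg_left
      (abs_sum_mul_le_norm (hGpos j x) (hGsum j x) (Q - Qt)) hβ0
  set m := ∑ j, ∫ z : Fin (J + 1) → ℝ, |z j| * f z
  set ρ := ∫ z : Fin (J + 1) → ℝ, (1 + ∑ j, |z j|) * |f z - ftil z|
  have hQnorm : ‖Q‖ ≤ (ubar + m) / (1 - β) := by
    have h : ‖Q‖ ≤ ubar + β * ‖Q‖ + m := (pi_norm_le_iff_of_nonempty _).2 fun x => by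
      rw [Real.norm_eq_abs, hQ x]
      exact abs_integral_sup'_add_mul_le hfint hfnonneg hfprob hfmom (hv Q x)
    rw [le_div_iff₀ hβ]
    linarith
  set M := max 1 (ubar + β * (ubar + m) / (1 - β))
  have hAM : ubar + β * ‖Q‖ ≤ M := by
    refine le_trans ?_ (le_max_right _ _)
    rw [mul_div_assoc]
    exact add_le_add_right (mul_le_mul_of_nonneg_left hQnorm hβ0) _
  have hnorm : ‖Q - Qt‖ ≤ M * ρ + β * ‖Q - Qt‖ :=
    (pi_norm_le_iff_of_nonempty _).2 fun x => by
      rw [Pi.sub_apply, Real.norm_eq_abs, hQ x, hQt x]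
      exact abs_integral_sup'_add_mul_sub_le hfint hfnonneg hfmom hgint hgnonneg hgprob hgmom
        (hv Q x) (hv Qt x) (hdiff x) (le_max_left _ _) hAM
  intro x
  refine (norm_le_pi_norm (Q - Qt) x).trans ?_
  rw [hC, div_mul_eq_mul_div, le_div_iff₀ hβ]
  linarith
end

section
/- Consider the dynamic discrete choice model with finite state space, and suppose |u(x,j)| ≤ ū < ∞ for all x ∈ X and j = 0,1,…,J. Let F be a probability distribution on ℝ^{J+1} with a density, with E_F|ε_j| < ∞ for all j, and such that for all j ≠ d the density of ε_j − ε_d under F is bounded by f̄ < ∞. Let F̃ be any probability distribution on ℝ^{J+1} with a density and finite first moments. Then, with C = max{1, ū + β(ū + Σ_{j=0}^J E_F|ε_j|)/(1−β)} / (1−β), the conditional choice probabilities satisfy sup_{d,x} |p(d|x;F) − p(d|x;F̃)| ≤ (4(J+1)βC f̄ + 1) · ρ(F,F̃). -/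
open MeasureTheory Real

section Maximum

variable {ι : Type*} [Fintype ι]

/-- The maximum of `v + z` is bounded by a bound on `v` plus the `ℓ¹` norm of `z`. -/
lemma abs_max_add_le [Nonempty ι] (v z : ι → ℝ) (B : ℝ) (hv : ∀ j, |v j| ≤ B) :
    |Finset.univ.sup' Finset.univ_nonempty (fun j => v j + z j)| ≤ B + ∑ j, |z j| := by
  obtain ⟨i, -, hi⟩ := Finset.exists_mem_eq_sup' Finset.univ_nonempty (fun j => v j + z j)
  rw [hi]
  exact (abs_add_le _ _).trans (add_le_add (hv i)
    (Finset.single_le_sum (f := fun j => |z j|) (fun j _ => abs_nonneg _) (Finset.mem_univ i)))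

lemma max_add_le_of_abs_sub_le [Nonempty ι] (v w z : ι → ℝ) (δ : ℝ) (h : ∀ j, |v j - w j| ≤ δ) :
    Finset.univ.sup' Finset.univ_nonempty (fun j => v j + z j) ≤
      δ + Finset.univ.sup' Finset.univ_nonempty (fun j => w j + z j) := by
  refine Finset.sup'_le _ _ fun j _ => ?_
  have h₁ := Finset.le_sup' (fun j => w j + z j) (Finset.mem_univ j)
  have h₂ := (abs_le.1 (h j)).2
  linarith

/-- The maximum is `1`-Lipschitz for the sup norm. -/
lemma abs_max_sub_max_le [Nonempty ι] (v w z : ι → ℝ) (δ : ℝ) (h : ∀ j, |v j - w j| ≤ δ) :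
    |Finset.univ.sup' Finset.univ_nonempty (fun j => v j + z j) -
      Finset.univ.sup' Finset.univ_nonempty (fun j => w j + z j)| ≤ δ := by
  have h₁ := max_add_le_of_abs_sub_le v w z δ h
  have h₂ := max_add_le_of_abs_sub_le w v z δ fun j => by rw [abs_sub_comm]; exact h j
  exact abs_le.2 ⟨by linarith, by linarith⟩

lemma measurable_max_add [Nonempty ι] (v : ι → ℝ) :
    Measurable fun z : ι → ℝ =>
      Finset.univ.sup' Finset.univ_nonempty (fun j => v j + z j) := by
  refine Continuous.measurable ?_
  refine Continuous.finset_sup'_apply _ fun j _ => ?_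
  fun_prop

/-- A weighted average is bounded by a common bound on its terms. -/
lemma abs_sum_mul_le_of_sum_eq_one (w a : ι → ℝ) (q : ℝ) (hw : ∀ y, 0 ≤ w y)
    (hsum : ∑ y, w y = 1) (ha : ∀ y, |a y| ≤ q) : |∑ y, w y * a y| ≤ q := by
  calc |∑ y, w y * a y| ≤ ∑ y, |w y * a y| := Finset.abs_sum_le_sum_abs _ _
    _ ≤ ∑ y, w y * q := Finset.sum_le_sum fun y _ => by
        rw [abs_mul, abs_of_nonneg (hw y)]
        exact mul_le_mul_of_nonneg_left (ha y) (hw y)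
    _ = q := by rw [← Finset.sum_mul, hsum, one_mul]

end Maximum

section Integrals

variable {ι : Type*} [Fintype ι]

lemma integrable_add_sum_abs_mul (g : (ι → ℝ) → ℝ) (hg : Integrable g)
    (hmom : ∀ j, Integrable fun z : ι → ℝ => |z j| * g z) (B : ℝ) :
    Integrable fun z : ι → ℝ => (B + ∑ j, |z j|) * g z := by
  simp only [add_mul, Finset.sum_mul]
  exact (hg.const_mul B).add (integrable_finsetSum _ fun j _ => hmom j)

lemma integrable_max_add_mul [Nonempty ι] (g : (ι → ℝ) → ℝ) (hg : Integrable g)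
    (hmom : ∀ j, Integrable fun z : ι → ℝ => |z j| * g z) (v : ι → ℝ) :
    Integrable fun z : ι → ℝ =>
      (Finset.univ.sup' Finset.univ_nonempty (fun j => v j + z j)) * g z := by
  refine (integrable_add_sum_abs_mul g hg hmom (∑ j, |v j|)).mono
    ((measurable_max_add v).aestronglyMeasurable.mul hg.aestronglyMeasurable)
    (Filter.Eventually.of_forall fun z => ?_)
  rw [norm_mul, norm_mul]
  refine mul_le_mul_of_nonneg_right ?_ (norm_nonneg _)
  exact (abs_max_add_le v z _ fun j => Finset.single_le_sum (f := fun j => |v j|)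
    (fun _ _ => abs_nonneg _) (Finset.mem_univ j)).trans (le_abs_self _)

/-- The expected maximum is bounded by a bound on `v` plus the first moments. -/
lemma abs_integral_max_add_mul_le [Nonempty ι] (g : (ι → ℝ) → ℝ) (hg : Integrable g)
    (hnonneg : ∀ z, 0 ≤ g z) (hprob : ∫ z, g z = 1)
    (hmom : ∀ j, Integrable fun z : ι → ℝ => |z j| * g z)
    (v : ι → ℝ) (B : ℝ) (hv : ∀ j, |v j| ≤ B) :
    |∫ z : ι → ℝ, (Finset.univ.sup' Finset.univ_nonempty (fun j => v j + z j)) * g z| ≤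
      B + ∑ j, ∫ z : ι → ℝ, |z j| * g z := by
  have hbound := norm_integral_le_of_norm_le (integrable_add_sum_abs_mul g hg hmom B)
    (f := fun z : ι → ℝ => (Finset.univ.sup' Finset.univ_nonempty (fun j => v j + z j)) * g z)
    (Filter.Eventually.of_forall fun z => by
      rw [norm_mul, Real.norm_of_nonneg (hnonneg z)]
      exact mul_le_mul_of_nonneg_right (abs_max_add_le v z B hv) (hnonneg z))
  refine hbound.trans_eq ?_
  simp only [add_mul, Finset.sum_mul]
  rw [integral_add (hg.const_mul B) (integrable_finsetSum _ fun j _ => hmom j),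
    integral_finsetSum _ fun j _ => hmom j, integral_const_mul, hprob, mul_one]

/-- The weighted `L¹` distance between two densities is an integral of an integrable function. -/
lemma integrable_add_sum_abs_mul_abs_sub (f g : (ι → ℝ) → ℝ) (hf : Integrable f)
    (hg : Integrable g) (hfmom : ∀ j, Integrable fun z : ι → ℝ => |z j| * f z)
    (hgmom : ∀ j, Integrable fun z : ι → ℝ => |z j| * g z) (B : ℝ) :
    Integrable fun z : ι → ℝ => (B + ∑ j, |z j|) * |f z - g z| := by
  refine integrable_add_sum_abs_mul (fun z => |f z - g z|) (hf.sub hg).abs (fun j => ?_) B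
  refine ((hfmom j).sub (hgmom j)).abs.congr (Filter.Eventually.of_forall fun z => ?_)
  simp only [Pi.sub_apply]
  rw [← mul_sub, abs_mul, abs_abs]

/-- The difference of expected maxima splits into a change of density and a change of `v`. -/
lemma abs_integral_max_sub_le [Nonempty ι] (f g : (ι → ℝ) → ℝ) (hf : Integrable f)
    (hg : Integrable g) (hgnonneg : ∀ z, 0 ≤ g z) (hgprob : ∫ z, g z = 1)
    (hfmom : ∀ j, Integrable fun z : ι → ℝ => |z j| * f z)
    (hgmom : ∀ j, Integrable fun z : ι → ℝ => |z j| * g z)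
    (v w : ι → ℝ) (B δ : ℝ) (hv : ∀ j, |v j| ≤ B) (hvw : ∀ j, |v j - w j| ≤ δ) :
    |(∫ z : ι → ℝ, (Finset.univ.sup' Finset.univ_nonempty (fun j => v j + z j)) * f z) -
      ∫ z : ι → ℝ, (Finset.univ.sup' Finset.univ_nonempty (fun j => w j + z j)) * g z| ≤
      max 1 B * (∫ z : ι → ℝ, (1 + ∑ j, |z j|) * |f z - g z|) + δ := by
  rw [← integral_sub (integrable_max_add_mul f hf hfmom v)
    (integrable_max_add_mul g hg hgmom w)]
  have hbd : Integrable fun z : ι → ℝ => max 1 B * ((1 + ∑ j, |z j|) * |f z - g z|) :=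
    (integrable_add_sum_abs_mul_abs_sub f g hf hg hfmom hgmom 1).const_mul _
  have hbound := norm_integral_le_of_norm_le (hbd.add (hg.const_mul δ))
    (f := fun z : ι → ℝ =>
      (Finset.univ.sup' Finset.univ_nonempty (fun j => v j + z j)) * f z -
      (Finset.univ.sup' Finset.univ_nonempty (fun j => w j + z j)) * g z)
    (Filter.Eventually.of_forall fun z => by
      set a := Finset.univ.sup' Finset.univ_nonempty (fun j => v j + z j)
      set b := Finset.univ.sup' Finset.univ_nonempty (fun j => w j + z j)
      have hS : 0 ≤ ∑ j, |z j| := Finset.sum_nonneg fun j _ => abs_nonneg _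
      have h₁ : |a| ≤ max 1 B * (1 + ∑ j, |z j|) := by
        refine (abs_max_add_le v z B hv).trans ?_
        nlinarith [le_max_left 1 B, le_max_right 1 B]
      have h₂ : |a - b| ≤ δ := abs_max_sub_max_le v w z δ hvw
      rw [Real.norm_eq_abs, show a * f z - b * g z = a * (f z - g z) + (a - b) * g z by ring]
      refine (abs_add_le _ _).trans ?_
      rw [abs_mul, abs_mul, abs_of_nonneg (hgnonneg z), Pi.add_apply, ← mul_assoc]
      exact add_le_add (mul_le_mul_of_nonneg_right h₁ (abs_nonneg _))
        (mul_le_mul_of_nonneg_right h₂ (hgnonneg z)))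
  refine hbound.trans_eq ?_
  simp only [Pi.add_apply]
  rw [integral_add hbd (hg.const_mul δ), integral_const_mul, integral_const_mul, hgprob, mul_one]

lemma measurableSet_optimal (v : ι → ℝ) (d : ι) :
    MeasurableSet {z : ι → ℝ | ∀ j, v j + z j ≤ v d + z d} := by
  rw [Set.ofPred_forall]
  exact MeasurableSet.iInter fun j => measurableSet_le (by fun_prop) (by fun_prop)

/-- If the differences `z j - z d` have density at most `c`, then moving the thresholds by at
most `δ` raises the probability that `d` is optimal by at most `c * δ` per alternative. -/
lemma setIntegral_optimal_le (f : (ι → ℝ) → ℝ) (hf : Integrable f)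
    (hnonneg : ∀ z, 0 ≤ f z) (c : ℝ) (hc : 0 ≤ c) (d : ι)
    (hdens : ∀ j, j ≠ d → ∀ a b : ℝ, a ≤ b →
      ∫ z in {z : ι → ℝ | z j - z d ∈ Set.Icc a b}, f z ≤ c * (b - a))
    (v w : ι → ℝ) (δ : ℝ) (hδ : 0 ≤ δ) (h : ∀ j, |(v d - v j) - (w d - w j)| ≤ δ) :
    ∫ z in {z : ι → ℝ | ∀ j, v j + z j ≤ v d + z d}, f z ≤
      (∫ z in {z : ι → ℝ | ∀ j, w j + z j ≤ w d + z d}, f z) +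
        Fintype.card ι * (c * δ) := by
  classical
  let U : ι → Set (ι → ℝ) := fun j => {z | z j - z d ∈ Set.Icc (w d - w j) (w d - w j + δ)}
  have hU : ∀ j, MeasurableSet (U j) := fun j =>
    measurableSet_Icc.preimage (by fun_prop : Measurable fun z : ι → ℝ => z j - z d)
  have hUint : ∀ j, Integrable ((U j).indicator f) := fun j => hf.indicator (hU j)
  have hsum : Integrable fun z => ∑ j ∈ Finset.univ.erase d, (U j).indicator f z :=
    integrable_finsetSum _ fun j _ => hUint j
  have hw := hf.indicator (measurableSet_optimal w d)
  have hle : ∀ z, {z : ι → ℝ | ∀ j, v j + z j ≤ v d + z d}.indicator f z ≤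
      {z : ι → ℝ | ∀ j, w j + z j ≤ w d + z d}.indicator f z +
        ∑ j ∈ Finset.univ.erase d, (U j).indicator f z := by
    intro z
    have hUnn : ∀ j ∈ Finset.univ.erase d, 0 ≤ (U j).indicator f z :=
      fun j _ => Set.indicator_nonneg (fun z _ => hnonneg z) z
    have hwnn : 0 ≤ {z : ι → ℝ | ∀ j, w j + z j ≤ w d + z d}.indicator f z :=
      Set.indicator_nonneg (fun z _ => hnonneg z) z
    by_cases hzv : z ∈ {z : ι → ℝ | ∀ j, v j + z j ≤ v d + z d}
    · rw [Set.indicator_of_mem hzv]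
      by_cases hzw : z ∈ {z : ι → ℝ | ∀ j, w j + z j ≤ w d + z d}
      · rw [Set.indicator_of_mem hzw]
        linarith [Finset.sum_nonneg hUnn]
      · obtain ⟨j, hj⟩ := not_forall.1 hzw
        have hjd : j ≠ d := by
          rintro rfl
          exact hj le_rfl
        have hzU : z ∈ U j := by
          have h₁ := hzv j
          have h₂ := (abs_le.1 (h j)).2
          exact ⟨by linarith, by linarith⟩
        have hsingle := Finset.single_le_sum hUnn
          (Finset.mem_erase.2 ⟨hjd, Finset.mem_univ j⟩)
        rw [Set.indicator_of_mem hzU] at hsingle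
        linarith
    · rw [Set.indicator_of_notMem hzv]
      linarith [Finset.sum_nonneg hUnn]
  rw [← integral_indicator (measurableSet_optimal v d),
    ← integral_indicator (measurableSet_optimal w d)]
  refine (integral_mono (hf.indicator (measurableSet_optimal v d)) (hw.add hsum) hle).trans ?_
  simp only [Pi.add_apply]
  rw [integral_add hw hsum, integral_finsetSum _ fun j _ => hUint j]
  refine add_le_add le_rfl ?_
  calc ∑ j ∈ Finset.univ.erase d, ∫ z, (U j).indicator f z
      ≤ ∑ _j ∈ Finset.univ.erase d, c * δ := by
        refine Finset.sum_le_sum fun j hj => ?_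
        rw [integral_indicator (hU j)]
        refine (hdens j (Finset.ne_of_mem_erase hj) _ _ (by linarith)).trans_eq ?_
        ring
    _ ≤ ∑ _j : ι, c * δ :=
        Finset.sum_le_sum_of_subset_of_nonneg (Finset.erase_subset _ _)
          fun _ _ _ => mul_nonneg hc hδ
    _ = Fintype.card ι * (c * δ) := by simp

end Integrals

/-- Lipschitz continuity of the conditional choice probabilities in the distribution of
shocks, in the distance `ρ(F,F̃) = ∫ (1 + Σ_j |ε_j|)|f(ε) − f̃(ε)| dε`. -/
theorem ccp_lipschitz_in_shock_distribution
    (K J : ℕ) (hK : 1 ≤ K)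
    (u : Fin K → Fin (J + 1) → ℝ) (β : ℝ) (hβ0 : 0 ≤ β) (hβ1 : β < 1)
    (G : Fin (J + 1) → Fin K → Fin K → ℝ)
    (hGpos : ∀ d x y, 0 ≤ G d x y) (hGsum : ∀ d x, ∑ y, G d x y = 1)
    (ubar : ℝ) (hu : ∀ x j, |u x j| ≤ ubar)
    -- the density `f` of `F` and the density `ftil` of `F̃`
    (f ftil : (Fin (J + 1) → ℝ) → ℝ)
    (hfmeas : Measurable f) (hfnonneg : ∀ z, 0 ≤ f z)
    (hfint : Integrable f) (hfprob : ∫ z, f z = 1)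
    (hfmom : ∀ j, Integrable fun z : Fin (J + 1) → ℝ => |z j| * f z)
    (hgmeas : Measurable ftil) (hgnonneg : ∀ z, 0 ≤ ftil z)
    (hgint : Integrable ftil) (hgprob : ∫ z, ftil z = 1)
    (hgmom : ∀ j, Integrable fun z : Fin (J + 1) → ℝ => |z j| * ftil z)
    -- under `F`, the density of `ε_j − ε_d` is bounded by `fbar` for all `j ≠ d`
    (fbar : ℝ) (hfbar0 : 0 ≤ fbar)
    (hfbar : ∀ j d : Fin (J + 1), j ≠ d → ∀ a b : ℝ, a ≤ b →
      ∫ z in {z : Fin (J + 1) → ℝ | z j - z d ∈ Set.Icc a b}, f z ≤ fbar * (b - a))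
    -- `Q` and `Qt` solve the Bellman equations under `F` and `F̃`, respectively
    (Q Qt : Fin K → ℝ)
    (hQ : ∀ x, Q x = ∫ z : Fin (J + 1) → ℝ,
      (Finset.univ.sup' Finset.univ_nonempty
        (fun j : Fin (J + 1) => u x j + β * ∑ y, G j x y * Q y + z j)) * f z)
    (hQt : ∀ x, Qt x = ∫ z : Fin (J + 1) → ℝ,
      (Finset.univ.sup' Finset.univ_nonempty
        (fun j : Fin (J + 1) => u x j + β * ∑ y, G j x y * Qt y + z j)) * ftil z)
    (C : ℝ)
    (hC : C = max 1 (ubar + β * (ubar + ∑ j, ∫ z : Fin (J + 1) → ℝ, |z j| * f z) / (1 - β))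
      / (1 - β)) :
    ∀ (d : Fin (J + 1)) (x : Fin K),
      |(∫ z in {z : Fin (J + 1) → ℝ | ∀ j : Fin (J + 1),
            u x j + β * ∑ y, G j x y * Q y + z j ≤
              u x d + β * ∑ y, G d x y * Q y + z d}, f z) -
        (∫ z in {z : Fin (J + 1) → ℝ | ∀ j : Fin (J + 1),
            u x j + β * ∑ y, G j x y * Qt y + z j ≤
              u x d + β * ∑ y, G d x y * Qt y + z d}, ftil z)| ≤
      (4 * (J + 1) * β * C * fbar + 1) *
        ∫ z : Fin (J + 1) → ℝ, (1 + ∑ j, |z j|) * |f z - ftil z| := by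
  have hb : 0 < 1 - β := by linarith
  have : Nonempty (Fin K) := ⟨⟨0, hK⟩⟩
  set S := ∑ j, ∫ z : Fin (J + 1) → ℝ, |z j| * f z
  set ρ := ∫ z : Fin (J + 1) → ℝ, (1 + ∑ j, |z j|) * |f z - ftil z|
  have hρ0 : 0 ≤ ρ := integral_nonneg fun z => by positivity
  have hvbound : ∀ q : ℝ, (∀ y, |Q y| ≤ q) → ∀ x j,
      |u x j + β * ∑ y, G j x y * Q y| ≤ ubar + β * q := by
    intro q hq x j
    refine (abs_add_le _ _).trans (add_le_add (hu x j) ?_)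
    rw [abs_mul, abs_of_nonneg hβ0]
    exact mul_le_mul_of_nonneg_left
      (abs_sum_mul_le_of_sum_eq_one _ _ q (hGpos j x) (hGsum j x) hq) hβ0
  have hdiff : ∀ q : ℝ, (∀ y, |Q y - Qt y| ≤ q) → ∀ x j,
      |(u x j + β * ∑ y, G j x y * Q y) - (u x j + β * ∑ y, G j x y * Qt y)| ≤ β * q := by
    intro q hq x j
    rw [add_sub_add_left_eq_sub, ← mul_sub, ← Finset.sum_sub_distrib, abs_mul,
      abs_of_nonneg hβ0]
    simp only [← mul_sub]
    exact mul_le_mul_of_nonneg_left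
      (abs_sum_mul_le_of_sum_eq_one _ _ q (hGpos j x) (hGsum j x) hq) hβ0
  have hQbound : ∀ y, |Q y| ≤ (ubar + S) / (1 - β) := by
    obtain ⟨x₀, hx₀⟩ := Finite.exists_max fun y => |Q y|
    have h := abs_integral_max_add_mul_le f hfint hfnonneg hfprob hfmom _ _
      (hvbound _ hx₀ x₀)
    rw [← hQ x₀] at h
    refine fun y => (hx₀ y).trans ?_
    rw [le_div_iff₀ hb]
    linarith
  have hQdiff : ∀ y, |Q y - Qt y| ≤ C * ρ := by
    obtain ⟨x₀, hx₀⟩ := Finite.exists_max fun y => |Q y - Qt y|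
    have h := abs_integral_max_sub_le f ftil hfint hgint hgnonneg hgprob hfmom hgmom _ _ _ _
      (hvbound _ hQbound x₀) (hdiff _ hx₀ x₀)
    rw [← hQ x₀, ← hQt x₀, ← mul_div_assoc] at h
    refine fun y => (hx₀ y).trans ?_
    rw [hC, div_mul_eq_mul_div, le_div_iff₀ hb]
    linarith
  have hC0 : 0 ≤ C := by
    rw [hC]
    exact div_nonneg (zero_le_one.trans (le_max_left _ _)) hb.le
  intro d x
  have hδ0 : 0 ≤ 2 * (β * (C * ρ)) := by positivity
  have hthr : ∀ j, |((u x d + β * ∑ y, G d x y * Q y) - (u x j + β * ∑ y, G j x y * Q y)) -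
      ((u x d + β * ∑ y, G d x y * Qt y) - (u x j + β * ∑ y, G j x y * Qt y))| ≤
      2 * (β * (C * ρ)) := by
    intro j
    have h₁ := abs_le.1 (hdiff _ hQdiff x d)
    have h₂ := abs_le.1 (hdiff _ hQdiff x j)
    exact abs_le.2 ⟨by linarith [h₁.1, h₂.2], by linarith [h₁.2, h₂.1]⟩
  have hup := setIntegral_optimal_le f hfint hfnonneg fbar hfbar0 d (fun j hj => hfbar j d hj)
    (fun j => u x j + β * ∑ y, G j x y * Q y) (fun j => u x j + β * ∑ y, G j x y * Qt y)
    _ hδ0 hthr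
  have hlow := setIntegral_optimal_le f hfint hfnonneg fbar hfbar0 d (fun j hj => hfbar j d hj)
    (fun j => u x j + β * ∑ y, G j x y * Qt y) (fun j => u x j + β * ∑ y, G j x y * Q y)
    _ hδ0 (fun j => by rw [abs_sub_comm]; exact hthr j)
  set A := {z : Fin (J + 1) → ℝ | ∀ j : Fin (J + 1), u x j + β * ∑ y, G j x y * Q y + z j ≤
    u x d + β * ∑ y, G d x y * Q y + z d}
  set At := {z : Fin (J + 1) → ℝ | ∀ j : Fin (J + 1), u x j + β * ∑ y, G j x y * Qt y + z j ≤
    u x d + β * ∑ y, G d x y * Qt y + z d}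
  have hdens : |(∫ z in At, f z) - ∫ z in At, ftil z| ≤ ρ := by
    rw [← integral_sub hfint.integrableOn hgint.integrableOn]
    refine (abs_integral_le_integral_abs).trans ?_
    refine (setIntegral_le_integral (hfint.sub hgint).abs
      (Filter.Eventually.of_forall fun z => abs_nonneg _)).trans ?_
    refine integral_mono (hfint.sub hgint).abs
      (integrable_add_sum_abs_mul_abs_sub f ftil hfint hgint hfmom hgmom 1) fun z => ?_
    exact le_mul_of_one_le_left (abs_nonneg _)
      (le_add_of_nonneg_right (Finset.sum_nonneg fun j _ => abs_nonneg _))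
  have hd := abs_le.1 hdens
  rw [Fintype.card_fin] at hup hlow
  push_cast at hup hlow
  have hX : 0 ≤ ((J : ℝ) + 1) * (fbar * (2 * (β * (C * ρ)))) := by positivity
  have hR : (4 * (J + 1) * β * C * fbar + 1) * ρ =
      2 * (((J : ℝ) + 1) * (fbar * (2 * (β * (C * ρ))))) + ρ := by ring
  rw [hR]
  exact abs_le.2 ⟨by linarith [hd.1], by linarith [hd.2]⟩
end

section
/- For every δ̄ > 0 there exist constants K₁, K₂, K₃, K₄ > 0 such that for all z ∈ ℝ and all δ ∈ ℝ with |δ| ≤ δ̄, |φ(z) − φ(z − δ)| ≤ L_φ(z) |δ|, where L_φ(z) = K₁ e^{−(z+γ)} e^{−e^{−K₂(z+γ)}} if z > −γ, and L_φ(z) = K₃ e^{−2(z+γ)} e^{−e^{−K₄(z+γ)}} otherwise. -/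
open MeasureTheory Real

theorem hasDerivAt_gumbelPdf (z : ℝ) :
    HasDerivAt gumbelPdf (gumbelPdf z * (exp (-(z + eulerMascheroniConstant)) - 1)) z := by
  have h1 : HasDerivAt (fun x : ℝ => -(x + eulerMascheroniConstant)) (-1) z :=
    ((hasDerivAt_id z).add_const _).neg
  have h2 : HasDerivAt (fun x : ℝ => -x - eulerMascheroniConstant) (-1) z :=
    (hasDerivAt_id z).neg.sub_const _
  refine ((h2.sub h1.exp).exp).congr_deriv ?_
  simp only [gumbelPdf, Pi.sub_apply]
  ring

theorem gumbelPdf_eq_mul (z : ℝ) :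
    gumbelPdf z = exp (-(z + eulerMascheroniConstant)) *
      exp (-exp (-(z + eulerMascheroniConstant))) := by
  rw [gumbelPdf, ← exp_add]
  ring_nf

/-- A uniform bound for the derivative of the Gumbel density on the ball of radius `d`
around `z`. -/
theorem abs_deriv_gumbelPdf_le {d z v : ℝ} (h : |v - z| ≤ d) :
    |gumbelPdf v * (exp (-(v + eulerMascheroniConstant)) - 1)| ≤
      exp d * exp (-(z + eulerMascheroniConstant)) *
        exp (-(exp (-d) * exp (-(z + eulerMascheroniConstant)))) *
        (exp d * exp (-(z + eulerMascheroniConstant)) + 1) := by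
  obtain ⟨hl, hu⟩ := abs_le.mp h
  have upper : exp (-(v + eulerMascheroniConstant)) ≤
      exp d * exp (-(z + eulerMascheroniConstant)) := by
    rw [← exp_add]
    exact exp_le_exp.mpr (by linarith)
  have lower : exp (-d) * exp (-(z + eulerMascheroniConstant)) ≤
      exp (-(v + eulerMascheroniConstant)) := by
    rw [← exp_add]
    exact exp_le_exp.mpr (by linarith)
  have factor : |exp (-(v + eulerMascheroniConstant)) - 1| ≤
      exp d * exp (-(z + eulerMascheroniConstant)) + 1 := by
    have := exp_pos (-(v + eulerMascheroniConstant))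
    rw [abs_le]
    constructor <;> linarith
  rw [abs_mul, gumbelPdf_eq_mul, abs_of_pos (by positivity)]
  gcongr

theorem abs_gumbelPdf_sub_le {d z δ : ℝ} (h : |δ| ≤ d) :
    |gumbelPdf z - gumbelPdf (z - δ)| ≤
      exp d * exp (-(z + eulerMascheroniConstant)) *
        exp (-(exp (-d) * exp (-(z + eulerMascheroniConstant)))) *
        (exp d * exp (-(z + eulerMascheroniConstant)) + 1) * |δ| := by
  have hd : 0 ≤ d := (abs_nonneg δ).trans h
  have key := (convex_closedBall z d).norm_image_sub_le_of_norm_hasDerivWithin_le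
    (fun v _ => (hasDerivAt_gumbelPdf v).hasDerivWithinAt)
    (fun v hv => abs_deriv_gumbelPdf_le (by simpa [dist_eq] using hv))
    (show z - δ ∈ Metric.closedBall z d by simpa [dist_eq] using h)
    (Metric.mem_closedBall_self hd)
  simpa [norm_eq_abs] using key

theorem le_inv_mul_sq_add {a t : ℝ} (ha : 0 < a) : t ≤ a⁻¹ * t ^ 2 + a := by
  have : a⁻¹ * t ^ 2 + a - t = a⁻¹ * ((t - a / 2) ^ 2 + 3 / 4 * a ^ 2) := by
    field_simp
    ring
  have : 0 ≤ a⁻¹ * ((t - a / 2) ^ 2 + 3 / 4 * a ^ 2) := by positivity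
  linarith

/-- Local Lipschitz continuity of the univariate Gumbel density in location, with an
explicit envelope. -/
theorem gumbel_locally_lipschitz_location (δbar : ℝ) (hδbar : 0 < δbar) :
    ∃ K1 K2 K3 K4 : ℝ, 0 < K1 ∧ 0 < K2 ∧ 0 < K3 ∧ 0 < K4 ∧
      ∀ z δ : ℝ, |δ| ≤ δbar →
        |gumbelPdf z - gumbelPdf (z - δ)| ≤
          (if z > -Real.eulerMascheroniConstant then
            K1 * Real.exp (-(z + Real.eulerMascheroniConstant)) *
              Real.exp (-Real.exp (-(K2 * (z + Real.eulerMascheroniConstant))))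
          else
            K3 * Real.exp (-(2 * (z + Real.eulerMascheroniConstant))) *
              Real.exp (-Real.exp (-(K4 * (z + Real.eulerMascheroniConstant))))) * |δ| := by
  refine ⟨exp δbar * (exp δbar + 1) * exp 1, 1, exp δbar * (exp δbar + 1) * exp (exp δbar), 1 / 2,
    by positivity, by positivity, by positivity, by positivity, fun z δ hδ => ?_⟩
  refine (abs_gumbelPdf_sub_le hδ).trans (mul_le_mul_of_nonneg_right ?_ (abs_nonneg δ))
  split_ifs with hz
  · set w := z + eulerMascheroniConstant
    have hexp : exp (-w) ≤ 1 := exp_le_one_iff.mpr (by linarith)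
    have double : exp (-(exp (-δbar) * exp (-w))) ≤ exp 1 * exp (-exp (-(1 * w))) := by
      rw [← exp_add 1, one_mul]
      have : 0 < exp (-δbar) * exp (-w) := by positivity
      exact exp_le_exp.mpr (by linarith)
    calc _ ≤ exp δbar * exp (-w) * (exp 1 * exp (-exp (-(1 * w)))) * (exp δbar * 1 + 1) := by
          gcongr
      _ = _ := by ring
  · set w := z + eulerMascheroniConstant
    have hexp : 1 ≤ exp (-w) := one_le_exp (by linarith)
    have square : exp (-w) = exp (-(1 / 2 * w)) ^ 2 := by
      rw [← exp_nat_mul]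
      congr 1
      push_cast
      ring
    have double : exp (-(exp (-δbar) * exp (-w))) ≤
        exp (exp δbar) * exp (-exp (-(1 / 2 * w))) := by
      rw [← exp_add (exp δbar), exp_neg δbar, square]
      have := le_inv_mul_sq_add (t := exp (-(1 / 2 * w))) (exp_pos δbar)
      exact exp_le_exp.mpr (by linarith)
    calc _ ≤ exp δbar * exp (-w) * (exp (exp δbar) * exp (-exp (-(1 / 2 * w)))) *
          (exp δbar * exp (-w) + exp (-w)) := by gcongr
      _ = exp δbar * (exp δbar + 1) * exp (exp δbar) * (exp (-w) * exp (-w)) *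
          exp (-exp (-(1 / 2 * w))) := by ring
      _ = _ := by
        rw [← exp_add (-w)]
        ring_nf
end

section
/- For every δ̄ > 0 there exist constants K₁, K₂, K₃, K₄ > 0 such that for every d ≥ 1, every z ∈ ℝ^d and every δ ∈ ℝ^d with ‖δ‖_∞ ≤ δ̄, |φ(z; 0_d, 1) − φ(z − δ; 0_d, 1)| ≤ L̄_φ(z) ‖δ‖_∞, where L̄_φ(z) = Σ_{i=1}^d L_φ(z_i) ∏_{j<i} φ(z_j − δ_j) ∏_{j>i} φ(z_j), and L_φ(t) = K₁ e^{−(t+γ)} e^{−e^{−K₂(t+γ)}} if t > −γ, L_φ(t) = K₃ e^{−2(t+γ)} e^{−e^{−K₄(t+γ)}} otherwise. -/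
open MeasureTheory Real

/-- The Lipschitz envelope `L_φ` for the univariate Gumbel density. -/
noncomputable def Lenv (K1 K2 K3 K4 : ℝ) (t : ℝ) : ℝ :=
  if t > -Real.eulerMascheroniConstant then
    K1 * Real.exp (-(t + Real.eulerMascheroniConstant)) *
      Real.exp (-Real.exp (-(K2 * (t + Real.eulerMascheroniConstant))))
  else
    K3 * Real.exp (-(2 * (t + Real.eulerMascheroniConstant))) *
      Real.exp (-Real.exp (-(K4 * (t + Real.eulerMascheroniConstant))))

lemma gumbelPdf_nonneg (t : ℝ) : 0 ≤ gumbelPdf t :=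
  (Real.exp_pos _).le

lemma hasDerivAt_gumbelPdf_s10 (t : ℝ) :
    HasDerivAt gumbelPdf
      ((Real.exp (-(t + Real.eulerMascheroniConstant)) - 1) * gumbelPdf t) t := by
  have hlin : HasDerivAt (fun x : ℝ => -(x + Real.eulerMascheroniConstant)) (-1) t :=
    ((hasDerivAt_id t).add_const _).neg
  have hsub : HasDerivAt (fun x : ℝ => -x - Real.eulerMascheroniConstant) (-1) t :=
    (hasDerivAt_id t).neg.sub_const _
  refine (hsub.sub hlin.exp).exp.congr_deriv ?_
  simp only [gumbelPdf, Pi.sub_apply]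
  ring

/-- The derivative of the Gumbel density near `t` is bounded in terms of `t` alone. -/
lemma abs_deriv_gumbelPdf_le_s10 {D s t : ℝ} (hst : |s - t| ≤ D) :
    |(Real.exp (-(s + Real.eulerMascheroniConstant)) - 1) * gumbelPdf s| ≤
      (Real.exp D * Real.exp (-(t + Real.eulerMascheroniConstant)) + 1) *
        (Real.exp D * Real.exp (-(t + Real.eulerMascheroniConstant))) *
        Real.exp (-(Real.exp (-D) * Real.exp (-(t + Real.eulerMascheroniConstant)))) := by
  obtain ⟨hl, hr⟩ := abs_le.mp hst
  have hupper : Real.exp (-(s + Real.eulerMascheroniConstant)) ≤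
      Real.exp D * Real.exp (-(t + Real.eulerMascheroniConstant)) := by
    rw [← Real.exp_add]
    exact Real.exp_le_exp.mpr (by linarith)
  have hlower : Real.exp (-D) * Real.exp (-(t + Real.eulerMascheroniConstant)) ≤
      Real.exp (-(s + Real.eulerMascheroniConstant)) := by
    rw [← Real.exp_add]
    exact Real.exp_le_exp.mpr (by linarith)
  have hpdf : gumbelPdf s = Real.exp (-(s + Real.eulerMascheroniConstant)) *
      Real.exp (-Real.exp (-(s + Real.eulerMascheroniConstant))) := by
    rw [gumbelPdf, ← Real.exp_add]
    ring_nf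
  have hfactor : |Real.exp (-(s + Real.eulerMascheroniConstant)) - 1| ≤
      Real.exp D * Real.exp (-(t + Real.eulerMascheroniConstant)) + 1 := by
    have := Real.exp_pos (-(s + Real.eulerMascheroniConstant))
    rw [abs_le]
    constructor <;> linarith
  rw [abs_mul, abs_of_nonneg (gumbelPdf_nonneg s), hpdf, mul_assoc]
  gcongr

lemma exp_neg_mul_sq_le {c : ℝ} (hc : 0 < c) (v : ℝ) :
    Real.exp (-(c * v ^ 2)) ≤ Real.exp (1 / (4 * c)) * Real.exp (-v) := by
  rw [← Real.exp_add]
  refine Real.exp_le_exp.mpr ?_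
  have hsq : c * v ^ 2 + 1 / (4 * c) - v = c * (v - 1 / (2 * c)) ^ 2 := by
    field_simp
    ring
  have : 0 ≤ c * (v - 1 / (2 * c)) ^ 2 := by positivity
  linarith

/-- For suitable constants, the envelope dominates the bound on the derivative. -/
lemma deriv_bound_le_Lenv {D : ℝ} (hD : 0 ≤ D) (t : ℝ) :
    (Real.exp D * Real.exp (-(t + Real.eulerMascheroniConstant)) + 1) *
        (Real.exp D * Real.exp (-(t + Real.eulerMascheroniConstant))) *
        Real.exp (-(Real.exp (-D) * Real.exp (-(t + Real.eulerMascheroniConstant)))) ≤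
      Lenv ((Real.exp D + 1) * Real.exp D * Real.exp 1) 1
        (2 * Real.exp D ^ 2 * Real.exp (1 / (4 * Real.exp (-D)))) (1 / 2) t := by
  have hexpD : 1 ≤ Real.exp D := Real.one_le_exp hD
  unfold Lenv
  split_ifs with h
  · generalize hu : t + Real.eulerMascheroniConstant = u
    have hw : Real.exp (-u) ≤ 1 := Real.exp_le_one_iff.mpr (by linarith)
    have hone : Real.exp (-(Real.exp (-D) * Real.exp (-u))) ≤ 1 :=
      Real.exp_le_one_iff.mpr (neg_nonpos.mpr (by positivity))
    have htail : 1 ≤ Real.exp 1 * Real.exp (-Real.exp (-(1 * u))) := by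
      rw [← Real.exp_add, one_mul]
      exact Real.one_le_exp (by linarith)
    calc _ ≤ (Real.exp D * 1 + 1) * (Real.exp D * Real.exp (-u)) * 1 := by gcongr
      _ ≤ (Real.exp D * 1 + 1) * (Real.exp D * Real.exp (-u)) *
          (Real.exp 1 * Real.exp (-Real.exp (-(1 * u)))) := by gcongr
      _ = _ := by ring
  · generalize hu : t + Real.eulerMascheroniConstant = u
    have hw : 1 ≤ Real.exp (-u) := Real.one_le_exp (by linarith)
    have hprod : 1 ≤ Real.exp D * Real.exp (-u) := one_le_mul_of_one_le_of_one_le hexpD hw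
    have hhalf : Real.exp (-u) = Real.exp (-(1 / 2 * u)) ^ 2 := by
      rw [← Real.exp_nat_mul]
      ring_nf
    have hdouble : Real.exp (-(2 * u)) = Real.exp (-u) ^ 2 := by
      rw [← Real.exp_nat_mul]
      ring_nf
    have htail : Real.exp (-(Real.exp (-D) * Real.exp (-u))) ≤
        Real.exp (1 / (4 * Real.exp (-D))) * Real.exp (-Real.exp (-(1 / 2 * u))) := by
      rw [hhalf]
      exact exp_neg_mul_sq_le (Real.exp_pos _) _
    calc _ ≤ (Real.exp D * Real.exp (-u) + Real.exp D * Real.exp (-u)) *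
          (Real.exp D * Real.exp (-u)) *
          (Real.exp (1 / (4 * Real.exp (-D))) * Real.exp (-Real.exp (-(1 / 2 * u)))) := by
          gcongr
      _ = _ := by
          rw [hdouble]
          ring

/-- The univariate Gumbel density is locally Lipschitz with envelope `Lenv`. -/
lemma abs_gumbelPdf_sub_le_s10 {D : ℝ} {t x : ℝ} (hx : |x| ≤ D) :
    |gumbelPdf (t - x) - gumbelPdf t| ≤
      Lenv ((Real.exp D + 1) * Real.exp D * Real.exp 1) 1
        (2 * Real.exp D ^ 2 * Real.exp (1 / (4 * Real.exp (-D)))) (1 / 2) t * |x| := by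
  have hD : 0 ≤ D := (abs_nonneg x).trans hx
  have hmvt := (convex_closedBall t D).norm_image_sub_le_of_norm_hasDerivWithin_le
    (fun s _ => (hasDerivAt_gumbelPdf_s10 s).hasDerivWithinAt)
    (fun s hs => (abs_deriv_gumbelPdf_le_s10 (by simpa [Real.dist_eq] using hs)).trans
      (deriv_bound_le_Lenv hD t))
    (Metric.mem_closedBall_self hD)
    (show t - x ∈ Metric.closedBall t D by simpa [Real.dist_eq] using hx)
  simpa using hmvt

lemma mGumbelPdf_zero_one {d : ℕ} (z : Fin d → ℝ) :
    mGumbelPdf (fun _ => 0) 1 z = ∏ j, gumbelPdf (z j) := by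
  simp [mGumbelPdf]

/-- Local Lipschitz continuity of the multivariate Gumbel density in location, with an
explicit envelope. -/
theorem mgumbel_locally_lipschitz_location (δbar : ℝ) (hδbar : 0 < δbar) :
    ∃ K1 K2 K3 K4 : ℝ, 0 < K1 ∧ 0 < K2 ∧ 0 < K3 ∧ 0 < K4 ∧
      ∀ (d : ℕ), 1 ≤ d → ∀ z δ : Fin d → ℝ, ‖δ‖ ≤ δbar →
        |mGumbelPdf (fun _ => 0) 1 z - mGumbelPdf (fun _ => 0) 1 (z - δ)| ≤
          (∑ i, Lenv K1 K2 K3 K4 (z i) *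
            (∏ j ∈ Finset.univ.filter (fun j => j < i), gumbelPdf (z j - δ j)) *
            (∏ j ∈ Finset.univ.filter (fun j => i < j), gumbelPdf (z j))) * ‖δ‖ := by
  refine ⟨(Real.exp δbar + 1) * Real.exp δbar * Real.exp 1, 1,
    2 * Real.exp δbar ^ 2 * Real.exp (1 / (4 * Real.exp (-δbar))), 1 / 2,
    by positivity, by positivity, by positivity, by positivity, ?_⟩
  intro d _ z δ hδ
  have htelescope := Finset.prod_add_ordered Finset.univ (fun j => gumbelPdf (z j))
    (fun j => gumbelPdf (z j - δ j) - gumbelPdf (z j))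
  simp only [add_sub_cancel] at htelescope
  rw [mGumbelPdf_zero_one, mGumbelPdf_zero_one, abs_sub_comm]
  simp only [Pi.sub_apply]
  rw [htelescope, add_sub_cancel_left, Finset.sum_mul]
  refine (Finset.abs_sum_le_sum_abs _ _).trans (Finset.sum_le_sum fun i _ => ?_)
  have hδi : |δ i| ≤ ‖δ‖ := norm_le_pi_norm δ i
  have hbefore : 0 ≤ ∏ j ∈ Finset.univ.filter (fun j => j < i), gumbelPdf (z j - δ j) :=
    Finset.prod_nonneg fun _ _ => gumbelPdf_nonneg _
  have hafter : 0 ≤ ∏ j ∈ Finset.univ.filter (fun j => i < j), gumbelPdf (z j) :=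
    Finset.prod_nonneg fun _ _ => gumbelPdf_nonneg _
  have hLenv := (mul_nonneg (by positivity) (by positivity)).trans
    (deriv_bound_le_Lenv hδbar.le (z i))
  have hi := (abs_gumbelPdf_sub_le_s10 (t := z i) (hδi.trans hδ)).trans
    (mul_le_mul_of_nonneg_left hδi hLenv)
  rw [abs_mul, abs_mul, abs_of_nonneg hbefore, abs_of_nonneg hafter]
  refine (mul_le_mul_of_nonneg_right (mul_le_mul_of_nonneg_right hi hbefore) hafter).trans_eq ?_
  ring
end

section
/- Consider the Bellman operator T : ℝ^K → ℝ^K of the dynamic discrete choice model with a Gumbel-mixture shock distribution, given by T(Q)(x) = Σ_{k=1}^m ω_k σ_k [A_{kx}(Q) + E1(e^{−a_{kx}(Q)})], where A_{kx}(Q) = log Σ_{j=1}^J exp((u(x,j) + β Σ_{y=1}^K G^j_{xy} Q(y) + μ_{jk})/σ_k) and a_{kx}(Q) = (u(x,0) + β Σ_{y=1}^K G^0_{xy} Q(y))/σ_k + γ − A_{kx}(Q). Then T is differentiable and its Jacobian satisfies ∂T(Q)(x)/∂Q(y) = β Σ_{d=0}^J G^d_{xy} p(d|x;Q), where p(0|x;Q)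 = Σ_{k=1}^m ω_k exp(−e^{−a_{kx}(Q)}) and, for d = 1,…,J, p(d|x;Q) = Σ_{k=1}^m ω_k exp((u(x,d) + β Σ_y G^d_{xy} Q(y) + μ_{dk})/σ_k − A_{kx}(Q)) (1 − exp(−e^{−a_{kx}(Q)})). -/
open MeasureTheory Real

/-- The exponential integral `E1(z) = ∫_z^∞ e^{−t}/t dt`. -/
noncomputable def E1 (z : ℝ) : ℝ := ∫ t in Set.Ioi z, Real.exp (-t) / t

theorem integrableOn_Ioi_exp_neg_div {c : ℝ} (hc : 0 < c) :
    IntegrableOn (fun t : ℝ => Real.exp (-t) / t) (Set.Ioi c) := by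
  refine Integrable.mono' ((integrableOn_exp_neg_Ioi c).mul_const c⁻¹)
    (Measurable.aestronglyMeasurable (by fun_prop))
    ((ae_restrict_iff' measurableSet_Ioi).2 (.of_forall fun t ht => ?_))
  have ht' : c < t := ht
  rw [Real.norm_of_nonneg (div_nonneg (Real.exp_pos _).le (hc.trans ht').le), div_eq_mul_inv]
  gcongr

theorem hasDerivAt_E1 {z : ℝ} (hz : 0 < z) : HasDerivAt E1 (-(Real.exp (-z) / z)) z := by
  have hint {w : ℝ} (hw : 0 < w) := integrableOn_Ioi_exp_neg_div hw
  have hE : E1 =ᶠ[nhds z]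
      fun w => E1 (z / 2) - ∫ t in (z / 2)..w, Real.exp (-t) / t := by
    filter_upwards [lt_mem_nhds hz] with w hw
    rw [← intervalIntegral.integral_Ioi_sub_Ioi' (hint (half_pos hz)) (hint hw), E1, E1]
    ring
  refine HasDerivAt.congr_of_eventuallyEq (HasDerivAt.const_sub _ ?_) hE
  refine intervalIntegral.integral_hasDerivAt_right ?_ ?_ ?_
  · exact (intervalIntegrable_iff_integrableOn_Ioc_of_le (half_le_self hz.le)).2
      ((hint (half_pos hz)).mono_set Set.Ioc_subset_Ioi_self)
  · exact Measurable.stronglyMeasurable (by fun_prop) |>.stronglyMeasurableAtFilter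
  · exact ContinuousAt.div (by fun_prop) continuousAt_id hz.ne'

/-- The derivative of `log ∑ exp` is the softmax-weighted sum of the derivatives. -/
theorem HasFDerivAt.log_sum_exp {E ι : Type*} [NormedAddCommGroup E] [NormedSpace ℝ E]
    [Fintype ι] [Nonempty ι] {v : ι → E → ℝ} {v' : ι → E →L[ℝ] ℝ} {q : E}
    (hv : ∀ j, HasFDerivAt (v j) (v' j) q) :
    HasFDerivAt (fun q => Real.log (∑ j, Real.exp (v j q)))
      (∑ j, Real.exp (v j q - Real.log (∑ i, Real.exp (v i q))) • v' j) q := by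
  have hpos : 0 < ∑ i, Real.exp (v i q) :=
    Finset.sum_pos (fun i _ => Real.exp_pos _) Finset.univ_nonempty
  refine ((HasFDerivAt.fun_sum fun j _ => (hv j).exp).log hpos.ne').congr_fderiv ?_
  simp only [Finset.smul_sum, smul_smul, Real.exp_sub, Real.exp_log hpos, div_eq_inv_mul]

theorem HasFDerivAt.E1_exp_neg {E : Type*} [NormedAddCommGroup E] [NormedSpace ℝ E]
    {f : E → ℝ} {f' : E →L[ℝ] ℝ} {q : E} (hf : HasFDerivAt f f' q) :
    HasFDerivAt (fun q => E1 (Real.exp (-f q))) (Real.exp (-Real.exp (-f q)) • f') q := by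
  refine ((hasDerivAt_E1 (Real.exp_pos (-f q))).comp_hasFDerivAt q hf.fun_neg.exp).congr_fderiv ?_
  rw [smul_neg, smul_neg, neg_smul, neg_neg, smul_smul, div_mul_cancel₀ _ (Real.exp_pos _).ne']

/-- The Bellman operator of the dynamic discrete choice model with Gumbel-mixture shocks is
differentiable and its Jacobian is `∂T(Q)(x)/∂Q(y) = β Σ_d G^d_{xy} p(d|x;Q)`. -/
theorem bellman_operator_jacobian
    (K J m : ℕ) (hK : 1 ≤ K) (hJ : 1 ≤ J) (hm : 1 ≤ m)
    (u : Fin K → Fin (J + 1) → ℝ) (β : ℝ) (hβ0 : 0 ≤ β) (hβ1 : β < 1)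
    (G : Fin (J + 1) → Fin K → Fin K → ℝ)
    (hGpos : ∀ d x y, 0 ≤ G d x y) (hGsum : ∀ d x, ∑ y, G d x y = 1)
    (ω : Fin m → ℝ) (μ : Fin m → Fin J → ℝ) (σ : Fin m → ℝ)
    (hω : ∀ k, 0 < ω k) (hωsum : ∑ k, ω k = 1) (hσ : ∀ k, 0 < σ k)
    -- the quantities `A_{kx}(Q)` and `a_{kx}(Q)`
    (A a : Fin m → Fin K → (Fin K → ℝ) → ℝ)
    (hA : ∀ k x Q, A k x Q =
      Real.log (∑ j : Fin J,
        Real.exp ((u x j.succ + β * ∑ y, G j.succ x y * Q y + μ k j) / σ k)))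
    (ha : ∀ k x Q, a k x Q =
      (u x 0 + β * ∑ y, G 0 x y * Q y) / σ k + Real.eulerMascheroniConstant - A k x Q)
    -- the conditional choice probabilities `p(d|x;Q)`
    (p : Fin (J + 1) → Fin K → (Fin K → ℝ) → ℝ)
    (hp0 : ∀ x Q, p 0 x Q = ∑ k, ω k * Real.exp (-Real.exp (-a k x Q)))
    (hpd : ∀ (d : Fin J) x Q, p d.succ x Q =
      ∑ k, ω k * Real.exp ((u x d.succ + β * ∑ y, G d.succ x y * Q y + μ k d) / σ k - A k x Q) *
        (1 - Real.exp (-Real.exp (-a k x Q))))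
    -- the Bellman operator `T`
    (T : (Fin K → ℝ) → (Fin K → ℝ))
    (hT : ∀ Q x, T Q x = ∑ k, ω k * σ k * (A k x Q + E1 (Real.exp (-a k x Q)))) :
    Differentiable ℝ T ∧
      ∀ (Q : Fin K → ℝ) (x y : Fin K),
        fderiv ℝ T Q (Pi.single y 1) x = β * ∑ d : Fin (J + 1), G d x y * p d x Q := by
  have : Nonempty (Fin J) := ⟨⟨0, hJ⟩⟩
  let L (d : Fin (J + 1)) (x : Fin K) : (Fin K → ℝ) →L[ℝ] ℝ :=
    β • ∑ y, G d x y • ContinuousLinearMap.proj y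
  have hL_single (d x y) : L d x (Pi.single y 1) = β * G d x y := by
    simp [L, Pi.single_apply]
  have hL (d x Q) : HasFDerivAt (fun Q : Fin K → ℝ => β * ∑ y, G d x y * Q y) (L d x) Q := by
    refine (L d x).hasFDerivAt.congr_of_eventuallyEq (.of_forall fun Q => ?_)
    simp [L]
  let A' (k : Fin m) (x : Fin K) (Q : Fin K → ℝ) : (Fin K → ℝ) →L[ℝ] ℝ :=
    ∑ j : Fin J, Real.exp ((u x j.succ + β * ∑ y, G j.succ x y * Q y + μ k j) / σ k - A k x Q) •
      (σ k)⁻¹ • L j.succ x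
  have hA' (k x Q) : HasFDerivAt (A k x) (A' k x Q) Q := by
    simp only [A', hA]
    rw [funext (hA k x)]
    exact HasFDerivAt.log_sum_exp fun j => by
      simpa only [div_eq_mul_inv] using
        (((hL j.succ x Q).const_add (u x j.succ)).add_const (μ k j)).mul_const (σ k)⁻¹
  have ha' (k x Q) : HasFDerivAt (a k x) ((σ k)⁻¹ • L 0 x - A' k x Q) Q := by
    rw [funext (ha k x)]
    simpa only [div_eq_mul_inv] using
      ((((hL 0 x Q).const_add (u x 0)).mul_const (σ k)⁻¹).add_const _).fun_sub (hA' k x Q)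
  have hT' (Q x) : HasFDerivAt (fun Q => T Q x)
      (∑ k, (ω k * σ k) • (A' k x Q +
        Real.exp (-Real.exp (-a k x Q)) • ((σ k)⁻¹ • L 0 x - A' k x Q))) Q := by
    simp only [hT]
    exact HasFDerivAt.fun_sum fun k _ => ((hA' k x Q).add (ha' k x Q).E1_exp_neg).const_mul _
  have hTQ (Q) := hasFDerivAt_pi.2 (hT' Q)
  refine ⟨fun Q => (hTQ Q).differentiableAt, fun Q x y => ?_⟩
  rw [(hTQ Q).fderiv, Fin.sum_univ_succ, hp0]
  simp only [hpd, A', ContinuousLinearMap.coe_pi', sum_apply, add_apply, sub_apply,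
    smul_apply, smul_eq_mul, hL_single]
  simp only [Finset.mul_sum (s := (Finset.univ : Finset (Fin m)))]
  rw [Finset.sum_comm, ← Finset.sum_add_distrib, Finset.mul_sum]
  refine Finset.sum_congr rfl fun k _ => ?_
  have hσk := (hσ k).ne'
  generalize Real.exp (-Real.exp (-a k x Q)) = P
  have hfactor (e : Fin J → ℝ) :
      ∑ j : Fin J, e j * ((σ k)⁻¹ * (β * G j.succ x y)) =
        (σ k)⁻¹ * β * ∑ j : Fin J, G j.succ x y * e j := by
    rw [Finset.mul_sum]
    exact Finset.sum_congr rfl fun j _ => by ring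
  have hfactor' (e : Fin J → ℝ) :
      ∑ j : Fin J, G j.succ x y * (ω k * e j * (1 - P)) =
        ω k * (1 - P) * ∑ j : Fin J, G j.succ x y * e j := by
    rw [Finset.mul_sum]
    exact Finset.sum_congr rfl fun j _ => by ring
  rw [hfactor, hfactor']
  field_simp
  ring
end

section
/- Let μ ∈ ℝ, σ > 0 and M ∈ ℝ, and set b = (M − μ)/σ + γ. Then ∫_M^∞ x φ(x; μ, σ) dx = μ − M exp(−e^{−b}) + σ E1(e^{−b}). -/
open MeasureTheory Real

theorem integral_log_mul_exp_neg_Ioi :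
    ∫ t in Set.Ioi (0 : ℝ), log t * exp (-t) = -eulerMascheroniConstant := by
  have hderiv : HasDerivAt Complex.GammaIntegral
      (∫ t : ℝ in Set.Ioi 0, (t : ℂ) ^ ((1 : ℂ) - 1) * (log t * exp (-t))) 1 :=
    Complex.hasDerivAt_GammaIntegral (by simp)
  have heq : Complex.Gamma =ᶠ[nhds 1] Complex.GammaIntegral := by
    filter_upwards [(isOpen_lt continuous_const Complex.continuous_re).mem_nhds
      (show (0 : ℝ) < (1 : ℂ).re by simp)] with s hs
    exact Complex.Gamma_eq_integral hs
  have h := (hderiv.congr_of_eventuallyEq heq).unique Complex.hasDerivAt_Gamma_one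
  simp only [sub_self, Complex.cpow_zero, one_mul] at h
  have hcast : ∫ t : ℝ in Set.Ioi 0, ((log t : ℂ) * (exp (-t) : ℂ)) =
      ((∫ t in Set.Ioi (0 : ℝ), log t * exp (-t) : ℝ) : ℂ) := by
    rw [← integral_complex_ofReal]
    simp
  push_cast at h hcast
  rw [hcast] at h
  exact_mod_cast h

theorem integrableOn_log_mul_exp_neg_Ioi :
    IntegrableOn (fun t => log t * exp (-t)) (Set.Ioi (0 : ℝ)) := by
  by_contra h
  have h0 := integral_log_mul_exp_neg_Ioi
  rw [integral_undef h] at h0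
  linarith [one_half_lt_eulerMascheroniConstant]

theorem integrableOn_exp_neg_div_Ioi {a : ℝ} (ha : 0 < a) :
    IntegrableOn (fun t => exp (-t) / t) (Set.Ioi a) := by
  refine ((integrableOn_exp_neg_Ioi a).const_mul a⁻¹).mono'
    (by fun_prop : Measurable fun t : ℝ => exp (-t) / t).aestronglyMeasurable ?_
  filter_upwards [ae_restrict_mem measurableSet_Ioi] with t ht
  have hat : a < t := ht
  rw [norm_of_nonneg (div_nonneg (exp_pos _).le (ha.trans hat).le), div_eq_inv_mul]
  gcongr

theorem tendsto_log_mul_exp_neg_atTop :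
    Filter.Tendsto (fun t => log t * exp (-t)) Filter.atTop (nhds 0) := by
  have h := tendsto_pow_mul_exp_neg_atTop_nhds_zero 1
  refine tendsto_of_tendsto_of_tendsto_of_le_of_le' tendsto_const_nhds h ?_ ?_
  · filter_upwards [Filter.eventually_ge_atTop 1] with t ht
    exact mul_nonneg (log_nonneg ht) (exp_pos _).le
  · filter_upwards [Filter.eventually_ge_atTop 1] with t ht
    rw [pow_one]
    gcongr
    exact log_le_self (by linarith)

theorem integral_log_mul_exp_neg_Ioi_eq_E1 {a : ℝ} (ha : 0 < a) :
    ∫ t in Set.Ioi a, log t * exp (-t) = log a * exp (-a) + E1 a := by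
  have hlog : IntegrableOn (fun t => log t * exp (-t)) (Set.Ioi a) :=
    integrableOn_log_mul_exp_neg_Ioi.mono_set (Set.Ioi_subset_Ioi ha.le)
  have hdiv := integrableOn_exp_neg_div_Ioi ha
  have h := integral_Ioi_of_hasDerivAt_of_tendsto'
    (f := fun t => log t * exp (-t)) (f' := fun t => exp (-t) / t - log t * exp (-t))
    (fun t ht => by
      have ht0 : t ≠ 0 := (ha.trans_le ht).ne'
      refine ((hasDerivAt_log ht0).mul (hasDerivAt_neg t).exp).congr_deriv ?_
      ring)
    (hdiv.sub hlog) tendsto_log_mul_exp_neg_atTop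
  rw [integral_sub hdiv hlog] at h
  rw [E1]
  linarith

theorem integral_log_mul_exp_neg_Ioo {a : ℝ} (ha : 0 < a) :
    ∫ t in Set.Ioo 0 a, log t * exp (-t) =
      -eulerMascheroniConstant - log a * exp (-a) - E1 a := by
  have h := setIntegral_union (μ := volume) (f := fun t => log t * exp (-t))
    (Set.Ioc_disjoint_Ioi le_rfl) (measurableSet_Ioi (a := a))
    (integrableOn_log_mul_exp_neg_Ioi.mono_set (Set.Ioc_subset_Ioi_self (a := a) (b := 0)))
    (integrableOn_log_mul_exp_neg_Ioi.mono_set (Set.Ioi_subset_Ioi ha.le))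
  rw [Set.Ioc_union_Ioi_eq_Ioi ha.le, integral_log_mul_exp_neg_Ioi,
    integral_log_mul_exp_neg_Ioi_eq_E1 ha, integral_Ioc_eq_integral_Ioo] at h
  linarith

theorem integral_exp_neg_Ioo {a : ℝ} (ha : 0 < a) :
    ∫ t in Set.Ioo 0 a, exp (-t) = 1 - exp (-a) := by
  rw [← integral_Ioc_eq_integral_Ioo, ← intervalIntegral.integral_of_le ha.le]
  simp

theorem image_exp_neg_affine_Ioi {σ : ℝ} (hσ : 0 < σ) (μ c M : ℝ) :
    (fun x => exp (-((x - μ) / σ + c))) '' Set.Ioi M =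
      Set.Ioo 0 (exp (-((M - μ) / σ + c))) := by
  ext t
  constructor
  · rintro ⟨x, hx, rfl⟩
    have hMx : M < x := hx
    refine ⟨exp_pos _, ?_⟩
    dsimp only
    gcongr
  · rintro ⟨ht0, ht⟩
    refine ⟨μ - σ * (c + log t), ?_, ?_⟩
    · have hlog := (log_lt_iff_lt_exp ht0).2 ht
      have hcancel : (M - μ) / σ * σ = M - μ := div_mul_cancel₀ _ hσ.ne'
      have hmul := mul_lt_mul_of_pos_right hlog hσ
      rw [Set.mem_Ioi]
      linarith
    · have harg : -((μ - σ * (c + log t) - μ) / σ + c) = log t := by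
        field_simp
        ring
      dsimp only
      rw [harg, exp_log ht0]

/-- Truncated first moment of the Gumbel distribution:
`∫_M^∞ x φ(x; μ, σ) dx = μ − M exp(−e^{−b}) + σ E1(e^{−b})` with `b = (M − μ)/σ + γ`. -/
theorem gumbel_truncated_integral (μ σ M : ℝ) (hσ : 0 < σ)
    (b : ℝ) (hb : b = (M - μ) / σ + Real.eulerMascheroniConstant) :
    ∫ x in Set.Ioi M, x * ((1 / σ) * gumbelPdf ((x - μ) / σ)) =
      μ - M * Real.exp (-Real.exp (-b)) + σ * E1 (Real.exp (-b)) := by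
  set c := eulerMascheroniConstant with hc
  have hderiv : ∀ x ∈ Set.Ioi M, HasDerivWithinAt (fun x => exp (-((x - μ) / σ + c)))
      (-(1 / σ) * exp (-((x - μ) / σ + c))) (Set.Ioi M) x := fun x _ => by
    refine (((((hasDerivAt_id x).sub_const μ).div_const σ).add_const c).neg.exp.congr_deriv
      ?_).hasDerivWithinAt
    simp only [id, Pi.neg_apply]
    ring
  have hinj : Set.InjOn (fun x => exp (-((x - μ) / σ + c))) (Set.Ioi M) := by
    intro x _ y _ hxy
    have hdiv : (x - μ) / σ = (y - μ) / σ := by linarith [exp_injective hxy]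
    linarith [(div_left_inj' hσ.ne').1 hdiv]
  have hsubst := integral_image_eq_integral_abs_deriv_smul measurableSet_Ioi hderiv hinj
    (fun t => (μ - σ * c) * exp (-t) - σ * (log t * exp (-t)))
  rw [image_exp_neg_affine_Ioi hσ, ← hb] at hsubst
  have hintegrand : ∀ x : ℝ, x * ((1 / σ) * gumbelPdf ((x - μ) / σ)) =
      |-(1 / σ) * exp (-((x - μ) / σ + c))| •
        ((μ - σ * c) * exp (-exp (-((x - μ) / σ + c))) -
          σ * (log (exp (-((x - μ) / σ + c))) * exp (-exp (-((x - μ) / σ + c))))) := fun x => by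
    have hpdf : gumbelPdf ((x - μ) / σ) =
        exp (-((x - μ) / σ + c)) * exp (-exp (-((x - μ) / σ + c))) := by
      rw [gumbelPdf, ← hc, ← exp_add]
      ring_nf
    rw [hpdf, neg_mul, abs_neg, abs_of_pos (by positivity), log_exp, smul_eq_mul]
    field_simp
    ring
  simp_rw [hintegrand]
  rw [← hsubst, integral_sub, integral_const_mul, integral_const_mul,
    integral_exp_neg_Ioo (exp_pos _), integral_log_mul_exp_neg_Ioo (exp_pos _), log_exp, ← hc]
  · have hM : M = μ - σ * c + σ * b := by
      rw [hb]
      field_simp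
      ring
    rw [hM]
    ring
  · exact ((integrableOn_exp_neg_Ioi 0).mono_set Set.Ioo_subset_Ioi_self).const_mul _
  · exact (integrableOn_log_mul_exp_neg_Ioi.mono_set Set.Ioo_subset_Ioi_self).const_mul _
end
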